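/- arXiv:2409.05619 — 2 statements merged into one kernel-verified Lean document; each statement's English description precedes it below -/
import Mathlib

section
/- Let 𝒮 be a measurable space such that s ↦ ρ_{x,y,s} is measurable for each (x,y)∈𝒳×𝒴, and suppose the family satisfies Assumption A. Define θ₁ := inf over families (U₁(·|x))_{x∈𝒳} of probability measures on 𝒮 of max_{x,x'∈𝒳, y∈𝒴} ‖∫_𝒮 ρ_{x,y,s} U₁(ds|x') − ∫_𝒮 ρ_{x',y,s} U₁(ds|x)‖₁; θ₂ := inf over families (U₂(·|y))_{y∈𝒴} of max_{x∈𝒳, y,y'∈𝒴} ‖∫_𝒮 ρ_{x,y,s} U₂(ds|y') − ∫_𝒮 ρ_{x,y',s} U₂(ds|y)‖₁; θ₃ := inf over families (U₃(·|x,y))_{(x,y)∈𝒳×𝒴} of max_{x,x'∈𝒳, y,y'∈𝒴} ‖∫_𝒮 ρ_{x,y,s} U₃(ds|x',y') − ∫_𝒮 ρ_{x',y',s} U₃(ds|x,y)‖₁ (Bochner integrals; ‖·‖₁ the trace norm). Then Int(ℛ_d) = ∅ if and only if θ₁ = 0 or θ₂ = 0 or θ₃ = 0. -/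
open scoped ComplexOrder Matrix
open MeasureTheory

noncomputable section

/-- A density matrix: positive semidefinite with unit trace. -/
def IsDensity {m : Type*} [Fintype m] (ρ : Matrix m m ℂ) : Prop :=
  ρ.PosSemidef ∧ ρ.trace = 1

/-- Loewner order `A ⪯ B`. -/
def Loewner {m : Type*} [Fintype m] (A B : Matrix m m ℂ) : Prop :=
  (B - A).PosSemidef

/-- Functional calculus for Hermitian matrices (junk value `0` on non-Hermitian input). -/
def matFun {m : Type*} [Fintype m] [DecidableEq m] (f : ℝ → ℝ) (A : Matrix m m ℂ) :
    Matrix m m ℂ :=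
  if hA : A.IsHermitian then
    (hA.eigenvectorUnitary : Matrix m m ℂ) *
        Matrix.diagonal (fun i => (f (hA.eigenvalues i) : ℂ)) *
      star (hA.eigenvectorUnitary : Matrix m m ℂ)
  else 0

/-- The trace norm (sum of singular values) of a matrix. -/
def traceNorm {m : Type*} [Fintype m] [DecidableEq m] (A : Matrix m m ℂ) : ℝ :=
  (Matrix.trace (matFun Real.sqrt (Aᴴ * A))).re

/-- Tensor product of a finite family of matrices, realized on functions. -/
def tensorFam {k d : Type*} [Fintype k] (ρ : k → Matrix d d ℂ) :
    Matrix (k → d) (k → d) ℂ :=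
  Matrix.of fun i j => ∏ a, ρ a (i a) (j a)

/-- Assumption A for a two-sender family. -/
def AssumptionA2 {𝒳 𝒴 𝒮 : Type*} {d : ℕ}
    (ρ : 𝒳 → 𝒴 → 𝒮 → Matrix (Fin d) (Fin d) ℂ) : Prop :=
  ∀ ε : ℝ, 0 < ε → ∃ Sε : Finset 𝒮, ∀ s : 𝒮, ∃ s' ∈ Sε, ∀ x y,
    Loewner (ρ x y s) ((1 + ε) • ρ x y s')

section Codes

variable {𝒳 𝒴 𝒮 : Type*} [Fintype 𝒳] [DecidableEq 𝒳] [Fintype 𝒴] [DecidableEq 𝒴] {d : ℕ}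

/-- `(R₁, R₂)` is an achievable deterministic rate pair for the CQ-AVMAC. -/
def AchievableDet (ρ : 𝒳 → 𝒴 → 𝒮 → Matrix (Fin d) (Fin d) ℂ) (R1 R2 : ℝ) : Prop :=
  0 ≤ R1 ∧ 0 ≤ R2 ∧
  ∀ β > (0 : ℝ), ∀ δ₁ > (0 : ℝ), ∀ δ₂ > (0 : ℝ), ∃ N : ℕ, ∀ n ≥ N,
    ∃ (M₁ M₂ : ℕ) (f₁ : Fin M₁ → (Fin n → 𝒳)) (f₂ : Fin M₂ → (Fin n → 𝒴))
      (D : Fin M₁ → Fin M₂ → Matrix (Fin n → Fin d) (Fin n → Fin d) ℂ),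
      (∀ m₁ m₂, (D m₁ m₂).PosSemidef) ∧
      (∑ m₁, ∑ m₂, D m₁ m₂ = 1) ∧
      (1 / (n : ℝ)) * Real.logb 2 M₁ > R1 - δ₁ ∧
      (1 / (n : ℝ)) * Real.logb 2 M₂ > R2 - δ₂ ∧
      (⨆ sv : Fin n → 𝒮,
        1 - (1 / ((M₁ : ℝ) * (M₂ : ℝ))) * ∑ m₁, ∑ m₂,
          (Matrix.trace (D m₁ m₂ *
            tensorFam fun k => ρ (f₁ m₁ k) (f₂ m₂ k) (sv k))).re) < β

/-- The deterministic code capacity region `ℛ_d`. -/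
def Rd (ρ : 𝒳 → 𝒴 → 𝒮 → Matrix (Fin d) (Fin d) ℂ) : Set (ℝ × ℝ) :=
  closure {r : ℝ × ℝ | AchievableDet ρ r.1 r.2}

end Codes

section Thetas

variable {𝒳 𝒴 𝒮 : Type*} [Fintype 𝒳] [DecidableEq 𝒳] [Fintype 𝒴] [DecidableEq 𝒴]
  [MeasurableSpace 𝒮] {d : ℕ}

/-- The entrywise Bochner integral of a matrix-valued map. -/
def mInt (μ : Measure 𝒮) (f : 𝒮 → Matrix (Fin d) (Fin d) ℂ) :
    Matrix (Fin d) (Fin d) ℂ :=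
  Matrix.of fun i j => ∫ s, f s i j ∂μ

/-- `θ₁`: the degree of `𝒳`-symmetrizability. -/
def theta1 (ρ : 𝒳 → 𝒴 → 𝒮 → Matrix (Fin d) (Fin d) ℂ) : ℝ :=
  ⨅ U : {U : 𝒳 → Measure 𝒮 // ∀ x, IsProbabilityMeasure (U x)},
    ⨆ x : 𝒳, ⨆ x' : 𝒳, ⨆ y : 𝒴,
      traceNorm (mInt (U.1 x') (fun s => ρ x y s) - mInt (U.1 x) (fun s => ρ x' y s))

/-- `θ₂`: the degree of `𝒴`-symmetrizability. -/
def theta2 (ρ : 𝒳 → 𝒴 → 𝒮 → Matrix (Fin d) (Fin d) ℂ) : ℝ :=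
  ⨅ U : {U : 𝒴 → Measure 𝒮 // ∀ y, IsProbabilityMeasure (U y)},
    ⨆ x : 𝒳, ⨆ y : 𝒴, ⨆ y' : 𝒴,
      traceNorm (mInt (U.1 y') (fun s => ρ x y s) - mInt (U.1 y) (fun s => ρ x y' s))

/-- `θ₃`: the degree of `𝒳𝒴`-symmetrizability. -/
def theta3 (ρ : 𝒳 → 𝒴 → 𝒮 → Matrix (Fin d) (Fin d) ℂ) : ℝ :=
  ⨅ U : {U : 𝒳 → 𝒴 → Measure 𝒮 // ∀ x y, IsProbabilityMeasure (U x y)},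
    ⨆ x : 𝒳, ⨆ x' : 𝒳, ⨆ y : 𝒴, ⨆ y' : 𝒴,
      traceNorm (mInt (U.1 x' y') (fun s => ρ x y s) - mInt (U.1 x y) (fun s => ρ x' y' s))

end Thetas

/-!
Converse. If the first sender's channel is approximately symmetrizable, a jammer who draws a message
`i'` and the states from `U` along its codeword makes the outputs of `(i, jammed as i')` and
`(i', jammed as i)` nearly indistinguishable. Averaged over `i` and `i'`, no decoder then succeeds
with probability much above one half, unless there is only one message. The same argument applies to
the second sender, and to the pair of senders regarded as a single one.

Direct part. Measuring every output with a fixed informationally complete measurement turns the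
channel into a classical one that is still not symmetrizable. The asymmetries of a channel under all
choices of `U` form a convex set that stays away from zero, so a separating functional yields
antisymmetric tests between letters whose means, for every state, favour the letter that was sent.
In a random codebook of small positive rate distinct codewords are nearly uncorrelated. Hence, by
Bessel's and Hoeffding's inequalities, for every state sequence most message pairs win all their
tests when sent: against the pairs that differ in the first, the second or both messages.
-/

namespace AVMAC

open Finset Filter ProbabilityTheory
open scoped BigOperators Topology

/-! ### Finite probability spaces -/

section FiniteProbability

variable {K Ω : Type*}

theorem sum_biUnion_le [DecidableEq Ω] {p : Ω → ℝ} (hp : ∀ ω, 0 ≤ p ω)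
    (s : Finset K) (B : K → Finset Ω) :
    ∑ ω ∈ s.biUnion B, p ω ≤ ∑ k ∈ s, ∑ ω ∈ B k, p ω := by
  classical
  induction s using Finset.induction_on with
  | empty => simp
  | insert k s hk ih =>
    rw [biUnion_insert, sum_insert hk]
    have hinter : 0 ≤ ∑ ω ∈ B k ∩ s.biUnion B, p ω := sum_nonneg fun ω _ => hp ω
    linarith [sum_union_inter (s₁ := B k) (s₂ := s.biUnion B) (f := p)]

variable [Fintype Ω]

theorem one_sub_sum_le_of_forall_mem {p : Ω → ℝ} (hp : p ∈ stdSimplex ℝ Ω)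
    (s : Finset K) (B : K → Finset Ω) (A : Finset Ω)
    (hA : ∀ ω, (∀ k ∈ s, ω ∉ B k) → ω ∈ A) :
    1 - ∑ k ∈ s, ∑ ω ∈ B k, p ω ≤ ∑ ω ∈ A, p ω := by
  classical
  have hcompl : (s.biUnion B)ᶜ ⊆ A := fun ω hω => hA ω (by simpa using hω)
  calc 1 - ∑ k ∈ s, ∑ ω ∈ B k, p ω ≤ 1 - ∑ ω ∈ s.biUnion B, p ω :=
        sub_le_sub_left (sum_biUnion_le hp.1 s B) 1
    _ = ∑ ω ∈ (s.biUnion B)ᶜ, p ω := by rw [← hp.2, ← sum_compl_add_sum (s.biUnion B)]; ring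
    _ ≤ ∑ ω ∈ A, p ω := sum_le_sum_of_subset_of_nonneg hcompl fun ω _ _ => hp.1 ω

variable [Fintype K]

theorem prod_mem_stdSimplex [DecidableEq K] {p : K → Ω → ℝ} (hp : ∀ k, p k ∈ stdSimplex ℝ Ω) :
    (fun ω : K → Ω => ∏ k, p k (ω k)) ∈ stdSimplex ℝ (K → Ω) := by
  refine ⟨fun ω => prod_nonneg fun k _ => (hp k).1 _, ?_⟩
  simp only [← Fintype.prod_sum, (hp _).2, prod_const_one]

theorem const_mem_stdSimplex [Nonempty Ω] :
    (fun _ : Ω => (Fintype.card Ω : ℝ)⁻¹) ∈ stdSimplex ℝ Ω :=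
  ⟨fun _ => by positivity, by simp⟩

theorem abs_sum_mul_le_one {p : Ω → ℝ} (hp : p ∈ stdSimplex ℝ Ω) {g : Ω → ℝ}
    (hg : ∀ o, |g o| ≤ 1) : |∑ o, p o * g o| ≤ 1 :=
  calc |∑ o, p o * g o| ≤ ∑ o, p o * |g o| := by
        simpa only [abs_mul, abs_of_nonneg (hp.1 _)] using
          abs_sum_le_sum_abs (fun o => p o * g o) univ
    _ ≤ ∑ o, p o := sum_le_sum fun o _ => mul_le_of_le_one_right (hp.1 o) (hg o)
    _ = 1 := hp.2

/-- The probability measure with mass function `p`. Negative masses are truncated to `0`, so it is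
used only for `p ∈ stdSimplex ℝ Ω`. -/
def massMeasure [MeasurableSpace Ω] (p : Ω → ℝ) : Measure Ω :=
  ∑ o, ENNReal.ofReal (p o) • Measure.dirac o

section massMeasure

variable [MeasurableSpace Ω]

theorem isProbabilityMeasure_massMeasure {p : Ω → ℝ} (hp : p ∈ stdSimplex ℝ Ω) :
    IsProbabilityMeasure (massMeasure p) :=
  ⟨by simp [massMeasure, ← ENNReal.ofReal_sum_of_nonneg fun o _ => hp.1 o, hp.2]⟩

theorem integral_massMeasure [MeasurableSingletonClass Ω] {p : Ω → ℝ} (hp : ∀ o, 0 ≤ p o)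
    (g : Ω → ℝ) : ∫ o, g o ∂massMeasure p = ∑ o, p o * g o := by
  rw [massMeasure, integral_finsetSum_measure fun o _ =>
    (integrable_dirac (by simp)).smul_measure ENNReal.ofReal_ne_top]
  simp [integral_smul_measure, hp]

theorem massMeasure_singleton [MeasurableSingletonClass Ω] (p : Ω → ℝ) (o : Ω) :
    massMeasure p {o} = ENNReal.ofReal (p o) := by
  classical
  simp [massMeasure, Set.indicator_apply]

end massMeasure

theorem sum_prod_le_exp_of_mul_le_sum {p : K → Ω → ℝ} (hp : ∀ k, p k ∈ stdSimplex ℝ Ω)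
    {g : K → Ω → ℝ} (hg : ∀ k o, |g k o| ≤ 1) {μ η : ℝ} (hη : 0 ≤ η)
    (hmean : ∑ k, ∑ o, p k o * g k o ≤ Fintype.card K * μ) {A : Finset (K → Ω)}
    (hA : ∀ ω ∈ A, Fintype.card K * (μ + η) ≤ ∑ k, g k (ω k)) :
    ∑ ω ∈ A, ∏ k, p k (ω k) ≤ Real.exp (-(Fintype.card K * (η ^ 2 / 2))) := by
  let _ : MeasurableSpace Ω := ⊤
  have : ∀ k, IsProbabilityMeasure (massMeasure (p k)) :=
    fun k => isProbabilityMeasure_massMeasure (hp k)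
  set P : Measure (K → Ω) := Measure.pi fun k => massMeasure (p k)
  set centred : K → (K → Ω) → ℝ := fun k ω => g k (ω k) - ∑ o, p k o * g k o
  have hsingleton : ∀ ω, P.real {ω} = ∏ k, p k (ω k) := fun ω => by
    simp [P, measureReal_def, Measure.pi_singleton, massMeasure_singleton, ENNReal.toReal_prod,
      ENNReal.toReal_ofReal ((hp _).1 _)]
  have hindep : iIndepFun centred P :=
    iIndepFun_pi (X := fun k o => g k o - ∑ o, p k o * g k o) fun k =>
      (measurable_of_finite _).aemeasurable
  have hsubG : ∀ k ∈ univ, HasSubgaussianMGF (centred k) 1 P := fun k _ => by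
    have hmean : ∫ ω, g k (ω k) ∂P = ∑ o, p k o * g k o :=
      (integral_comp_eval (μ := fun k => massMeasure (p k))
        (measurable_of_finite _).aestronglyMeasurable).trans (integral_massMeasure (hp k).1 _)
    have := hasSubgaussianMGF_of_mem_Icc (μ := P) (X := fun ω => g k (ω k)) (a := -1) (b := 1)
      ((measurable_of_finite (g k)).comp (measurable_pi_apply k)).aemeasurable
      (ae_of_all _ fun ω => abs_le.1 (hg k (ω k)))
    rw [hmean] at this
    convert this using 1
    norm_num
  have hevent : (A : Set (K → Ω)) ⊆ {ω | Fintype.card K * η ≤ ∑ k, centred k ω} := fun ω hω => by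
    have := hA ω hω
    simp only [centred, Set.mem_ofPred_eq, sum_sub_distrib]
    linarith
  calc ∑ ω ∈ A, ∏ k, p k (ω k) = P.real A := by
        simp only [← hsingleton, sum_measureReal_singleton]
    _ ≤ P.real {ω | Fintype.card K * η ≤ ∑ k, centred k ω} := measureReal_mono hevent
    _ ≤ Real.exp (-(Fintype.card K * η) ^ 2 / (2 * ∑ _k : K, ((1 : NNReal) : ℝ))) := by
        simpa using HasSubgaussianMGF.measure_sum_ge_le_of_iIndepFun hindep hsubG (by positivity)
    _ = Real.exp (-(Fintype.card K * (η ^ 2 / 2))) := by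
        rcases eq_or_ne (Fintype.card K : ℝ) 0 with hK | hK
        · simp [hK]
        · congr 1
          simp only [NNReal.coe_one, sum_const, card_univ, nsmul_eq_mul, mul_one]
          field_simp

end FiniteProbability

/-! ### Random codebooks with small correlations -/

section Codebook

variable {K I J X Y : Type*}

/-- A pair of block codebooks with block positions `K`: at each position, a letter of `X` for every
message in `I` and a letter of `Y` for every message in `J`. -/
abbrev Codebook (K I J X Y : Type*) := K → (I → X) × (J → Y)

/-- The pair of letters sent at position `k` for the message pair `a`. -/
def Codebook.letter (F : Codebook K I J X Y) (a : I × J) (k : K) : X × Y :=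
  ((F k).1 a.1, (F k).2 a.2)

/-- Two message pairs differ in both components. -/
def BothDiffer (a b : I × J) : Prop :=
  a.1 ≠ b.1 ∧ a.2 ≠ b.2

theorem exists_bothDiffer [Nontrivial I] [Nontrivial J] (a : I × J) : ∃ b, BothDiffer a b := by
  obtain ⟨i, hi⟩ := exists_ne a.1
  obtain ⟨j, hj⟩ := exists_ne a.2
  exact ⟨(i, j), hi.symm, hj.symm⟩

variable [Fintype I] [Fintype J] [Fintype X] [Fintype Y]

theorem sum_sum_update_update [DecidableEq I] [DecidableEq J] (i : I) (j : J)
    (G : (I → X) × (J → Y) → ℝ) :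
    ∑ c : (I → X) × (J → Y), ∑ p : X × Y,
      G (Function.update c.1 i p.1, Function.update c.2 j p.2) =
      Fintype.card (X × Y) * ∑ c, G c := by
  let exchange (q : ((I → X) × (J → Y)) × (X × Y)) : ((I → X) × (J → Y)) × (X × Y) :=
    ((Function.update q.1.1 i q.2.1, Function.update q.1.2 j q.2.2), (q.1.1 i, q.1.2 j))
  have hexchange : Function.Involutive exchange := fun q => by simp [exchange]
  calc _ = ∑ q, G (exchange q).1 := (Fintype.sum_prod_type _).symm
    _ = ∑ q : ((I → X) × (J → Y)) × (X × Y), G q.1 :=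
        Equiv.sum_comp hexchange.toPerm fun q => G q.1
    _ = _ := by simp [Fintype.sum_prod_type, mul_sum]

variable [Nonempty X] [Nonempty Y]

theorem sum_eq_zero_of_bothDiffer [DecidableEq I] [DecidableEq J]
    {κ : X × Y → X × Y → X × Y → X × Y → ℝ}
    (hκ : ∀ b c e, ∑ a, κ a b c e = 0) {a b c e : I × J}
    (hb : BothDiffer a b) (hc : BothDiffer a c) (he : BothDiffer a e) :
    ∑ f : (I → X) × (J → Y), κ (f.1 a.1, f.2 a.2) (f.1 b.1, f.2 b.2) (f.1 c.1, f.2 c.2)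
      (f.1 e.1, f.2 e.2) = 0 := by
  have hcard : (Fintype.card (X × Y) : ℝ) ≠ 0 := Nat.cast_ne_zero.2 Fintype.card_ne_zero
  refine (mul_eq_zero.1 ?_).resolve_left hcard
  rw [← sum_sum_update_update a.1 a.2]
  refine sum_eq_zero fun f _ => ?_
  simp only [Function.update_self, Function.update_of_ne hb.1.symm, Function.update_of_ne hb.2.symm,
    Function.update_of_ne hc.1.symm, Function.update_of_ne hc.2.symm,
    Function.update_of_ne he.1.symm, Function.update_of_ne he.2.symm, hκ]

variable [Fintype K]

theorem exists_codebook_sum_le {ι : Type*} [Fintype ι]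
    {κ : ι → X × Y → X × Y → X × Y → X × Y → ℝ} (hκ : ∀ i a b c e, |κ i a b c e| ≤ 1)
    (hκ0 : ∀ i b c e, ∑ a, κ i a b c e = 0) {η : ℝ} (hη : 0 ≤ η)
    (hlt : Fintype.card ι * (Fintype.card (I × J) : ℝ) ^ 4 *
      Real.exp (-(Fintype.card K * (η ^ 2 / 2))) < 1) :
    ∃ F : Codebook K I J X Y, ∀ i a b c e, BothDiffer a b → BothDiffer a c → BothDiffer a e →
      ∑ k, κ i (F.letter a k) (F.letter b k) (F.letter c k) (F.letter e k) ≤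
        Fintype.card K * η := by
  classical
  by_contra! hbad
  let corr (q : ι × (I × J) × (I × J) × (I × J) × (I × J)) (f : (I → X) × (J → Y)) : ℝ :=
    κ q.1 (f.1 q.2.1.1, f.2 q.2.1.2) (f.1 q.2.2.1.1, f.2 q.2.2.1.2)
      (f.1 q.2.2.2.1.1, f.2 q.2.2.2.1.2) (f.1 q.2.2.2.2.1, f.2 q.2.2.2.2.2)
  let index : Finset (ι × (I × J) × (I × J) × (I × J) × (I × J)) := {q |
    BothDiffer q.2.1 q.2.2.1 ∧ BothDiffer q.2.1 q.2.2.2.1 ∧ BothDiffer q.2.1 q.2.2.2.2}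
  let large (q : ι × (I × J) × (I × J) × (I × J) × (I × J)) : Finset (Codebook K I J X Y) :=
    {F | Fintype.card K * η < ∑ k, corr q (F k)}
  have huniform := const_mem_stdSimplex (Ω := (I → X) × (J → Y))
  have hlarge : ∀ q ∈ index,
      ∑ _F ∈ large q, ∏ _k : K, (Fintype.card ((I → X) × (J → Y)) : ℝ)⁻¹ ≤
      Real.exp (-(Fintype.card K * (η ^ 2 / 2))) := fun q hq => by
    obtain ⟨hb, hc, he⟩ := (mem_filter.1 hq).2
    have hmean : ∑ f, corr q f = 0 := sum_eq_zero_of_bothDiffer (hκ0 q.1) hb hc he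
    refine sum_prod_le_exp_of_mul_le_sum (g := fun _ => corr q) (μ := 0) (fun _ => huniform)
      (fun _ f => hκ _ _ _ _ _) hη (by simp [← mul_sum, hmean]) fun _ hF => ?_
    simpa using (mem_filter.1 hF).2.le
  have hunion := one_sub_sum_le_of_forall_mem
    (prod_mem_stdSimplex fun _ : K => huniform) index large ∅ fun F hF => by
      obtain ⟨i, a, b, c, e, hb, hc, he, hlt⟩ := hbad F
      exact (hF (i, a, b, c, e) (by simp [index, hb, hc, he]) (mem_filter.2 ⟨mem_univ _, hlt⟩)).elim
  have hindex : (#index : ℝ) ≤ Fintype.card ι * (Fintype.card (I × J) : ℝ) ^ 4 := by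
    have := card_le_univ index
    simp only [Fintype.card_prod] at this ⊢
    exact_mod_cast this.trans_eq (by ring)
  have hsum := (sum_le_sum hlarge).trans_eq (by rw [sum_const, nsmul_eq_mul])
  rw [sum_empty] at hunion
  linarith [mul_le_mul_of_nonneg_right hindex
    (Real.exp_pos (-(Fintype.card K * (η ^ 2 / 2)))).le]

end Codebook

section Overlap

variable {A : Type*} [Fintype A] [DecidableEq A]

/-- The centred indicator of `a = b`, restricted to `c = e`. As a kernel on the pairs `(a, c)` and
`(b, e)` it projects the functions on `A × A` onto those with mean `0` in the first argument. -/
def overlap (a b c e : A) : ℝ :=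
  ((if a = b then 1 else 0) - (Fintype.card A : ℝ)⁻¹) * (if c = e then 1 else 0)

theorem overlap_swap (a b c e : A) : overlap a b c e = overlap b a e c := by
  simp only [overlap, eq_comm]

theorem sum_mul_overlap (H : A → A → ℝ) (a c : A) :
    ∑ p : A × A, H p.1 p.2 * overlap a p.1 c p.2 = H a c - 𝔼 b, H b c := by
  simp [overlap, Fintype.sum_prod_type, mul_sub, sum_sub_distrib,
    Fintype.expect_eq_sum_div_card, ← sum_mul, div_eq_mul_inv]

variable [Nonempty A]

theorem abs_overlap_le_one (a b c e : A) : |overlap a b c e| ≤ 1 := by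
  have hinv : (Fintype.card A : ℝ)⁻¹ ≤ 1 :=
    inv_le_one_of_one_le₀ (Nat.one_le_cast.2 Fintype.card_pos)
  have hinv0 : 0 ≤ (Fintype.card A : ℝ)⁻¹ := by positivity
  unfold overlap
  rw [abs_le]
  split_ifs <;> constructor <;> linarith

theorem sum_overlap (b c e : A) : ∑ a, overlap a b c e = 0 := by
  simp [overlap]

theorem sum_overlap_mul_overlap (a b c e : A) :
    ∑ p : A × A, overlap a p.1 c p.2 * overlap b p.1 e p.2 = overlap a b c e := by
  rw [sum_mul_overlap (fun p q => overlap a p c q), Fintype.expect_eq_sum_div_card]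
  simp only [overlap_swap a, sum_overlap, zero_div, sub_zero]

variable {B K : Type*} [Fintype K]

theorem sq_card_mul_le_sum_overlap (t : Finset B) (w v : B → K → A) {H : K → A → A → ℝ}
    (hH : ∀ k a b, |H k a b| ≤ 1) {δ : ℝ} (hδ : 0 ≤ δ)
    (hlow : ∀ b ∈ t, ∑ k, H k (w b k) (v b k) ≤
      ∑ k, 𝔼 a, H k a (v b k) - Fintype.card K * δ) :
    (#t * (Fintype.card K * δ)) ^ 2 ≤ Fintype.card K * (Fintype.card A : ℝ) ^ 2 *
      ∑ b ∈ t, ∑ b' ∈ t, ∑ k, overlap (w b k) (w b' k) (v b k) (v b' k) := by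
  let total (q : K × A × A) : ℝ := ∑ b ∈ t, overlap (w b q.1) q.2.1 (v b q.1) q.2.2
  have hinner : ∑ q : K × A × A, H q.1 q.2.1 q.2.2 * total q =
      ∑ b ∈ t, ∑ k, (H k (w b k) (v b k) - 𝔼 a, H k a (v b k)) := by
    simp only [total, mul_sum]
    rw [sum_comm]
    simp only [Fintype.sum_prod_type (α₁ := K), sum_mul_overlap]
  have hnorm : ∑ q, total q ^ 2 =
      ∑ b ∈ t, ∑ b' ∈ t, ∑ k, overlap (w b k) (w b' k) (v b k) (v b' k) := by
    simp only [total, sq, sum_mul_sum]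
    rw [sum_comm]
    refine sum_congr rfl fun b _ => ?_
    rw [sum_comm]
    simp only [Fintype.sum_prod_type (α₁ := K), sum_overlap_mul_overlap]
  have hH2 : ∑ q : K × A × A, H q.1 q.2.1 q.2.2 ^ 2 ≤
      Fintype.card K * (Fintype.card A : ℝ) ^ 2 :=
    (sum_le_sum fun q _ => (sq_le_one_iff_abs_le_one _).2 (hH _ _ _)).trans_eq (by simp [sq])
  have hlow' : #t * (Fintype.card K * δ) ≤
      -∑ b ∈ t, ∑ k, (H k (w b k) (v b k) - 𝔼 a, H k a (v b k)) := by
    rw [← sum_neg_distrib, ← nsmul_eq_mul]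
    refine card_nsmul_le_sum t _ _ fun b hb => ?_
    rw [sum_sub_distrib]
    linarith [hlow b hb]
  calc (#t * (Fintype.card K * δ)) ^ 2
      ≤ (∑ q : K × A × A, H q.1 q.2.1 q.2.2 * total q) ^ 2 := by
        rw [hinner, ← neg_sq (∑ b ∈ t, _)]
        gcongr
    _ ≤ _ := sum_mul_sq_le_sq_mul_sq _ _ _
    _ ≤ _ := by
        rw [hnorm]
        exact mul_le_mul_of_nonneg_right hH2 (hnorm ▸ sum_nonneg fun _ _ => sq_nonneg _)

end Overlap

section BalancedCodebook

variable {K I J X Y : Type*} [Fintype K] [Fintype I] [Fintype J] [Fintype X] [Fintype Y]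
  [DecidableEq X] [DecidableEq Y] [Nonempty X] [Nonempty Y]

/-- Codewords overlap by at most `η` per letter, whenever the message pair indexing the first
codeword differs in both components from the other three. -/
def Codebook.OverlapLE (F : Codebook K I J X Y) (η : ℝ) : Prop :=
  ∀ a b c e, BothDiffer a b → BothDiffer a c → BothDiffer a e →
    ∑ k, overlap (F.letter a k) (F.letter b k) (F.letter c k) (F.letter e k) ≤ Fintype.card K * η

theorem exists_codebook_overlapLE_and_le_sum [Nontrivial I] [Nontrivial J] {τ : Type*} [Fintype τ]
    {φ : τ → X × Y → ℝ} (hφ : ∀ t a, |φ t a| ≤ 1) {η : ℝ} (hη : 0 ≤ η)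
    (hlt : (Fintype.card τ + 1) * (Fintype.card (I × J) : ℝ) ^ 4 *
      Real.exp (-(Fintype.card K * (η ^ 2 / 2))) < 1) :
    ∃ F : Codebook K I J X Y, F.OverlapLE η ∧
      ∀ t a, Fintype.card K * (𝔼 b, φ t b - 2 * η) ≤ ∑ k, φ t (F.letter a k) := by
  let κ : Option τ → X × Y → X × Y → X × Y → X × Y → ℝ
    | none => overlap
    | some t => fun a _ _ _ => (𝔼 b, φ t b - φ t a) / 2
  have hκ : ∀ i a b c e, |κ i a b c e| ≤ 1 := by
    rintro (_ | t) a b c e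
    · exact abs_overlap_le_one a b c e
    · have hmean : |𝔼 b, φ t b| ≤ 1 :=
        (abs_expect_le _ _).trans (expect_le univ_nonempty fun b _ => hφ t b)
      have hdiff := abs_sub (𝔼 b, φ t b) (φ t a)
      rw [abs_div, abs_two]
      linarith [hφ t a]
  have hκ0 : ∀ i b c e, ∑ a, κ i a b c e = 0 := by
    rintro (_ | t) b c e
    · exact sum_overlap b c e
    · simp only [κ, ← sum_div, sum_sub_distrib, sum_const, card_univ, nsmul_eq_mul,
        Fintype.card_mul_expect, sub_self, zero_div]
  obtain ⟨F, hF⟩ := exists_codebook_sum_le (K := K) (I := I) (J := J) hκ hκ0 hη (by simpa using hlt)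
  refine ⟨F, hF none, fun t a => ?_⟩
  obtain ⟨b, hab⟩ := exists_bothDiffer a
  have hdev := hF (some t) a b b b hab hab hab
  simp only [κ, ← sum_div, sum_sub_distrib, sum_const, card_univ, nsmul_eq_mul] at hdev
  linarith

theorem card_le_of_forall_not_bothDiffer {a c : I × J} {B : Finset (I × J)}
    (hB : ∀ b ∈ B, ¬(BothDiffer b a ∧ BothDiffer b c)) :
    #B ≤ 2 * (Fintype.card I + Fintype.card J) := by
  classical
  let cross (p : I × J) : Finset (I × J) := {p.1} ×ˢ univ ∪ univ ×ˢ {p.2}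
  have hcross : ∀ p, #(cross p) ≤ Fintype.card I + Fintype.card J := fun p =>
    (card_union_le _ _).trans_eq (by simp [add_comm])
  have hsub : B ⊆ cross a ∪ cross c := fun b hb => by
    have := hB b hb
    simp only [BothDiffer, cross, mem_union, mem_product, mem_singleton, mem_univ] at this ⊢
    tauto
  have := (card_le_card hsub).trans (card_union_le _ _)
  linarith [hcross a, hcross c]

theorem Codebook.OverlapLE.sum_overlap_le {F : Codebook K I J X Y} {η : ℝ} (hF : F.OverlapLE η)
    (hη : 0 ≤ η) {B : Finset (I × J)} {rival : I × J → I × J}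
    (hrival : ∀ a ∈ B, BothDiffer a (rival a)) (a : I × J) :
    ∑ b ∈ B, ∑ k, overlap (F.letter a k) (F.letter b k) (F.letter (rival a) k)
      (F.letter (rival b) k) ≤
      Fintype.card K * (#B * η + 2 * (Fintype.card I + Fintype.card J)) := by
  classical
  set n : ℝ := (Fintype.card K : ℝ)
  have hterm : ∀ b ∈ B, ∑ k, overlap (F.letter a k) (F.letter b k) (F.letter (rival a) k)
      (F.letter (rival b) k) ≤
      n * η + if ¬(BothDiffer b a ∧ BothDiffer b (rival a)) then n else 0 := fun b hb => by
    by_cases h : BothDiffer b a ∧ BothDiffer b (rival a)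
    · rw [if_neg (not_not.2 h), add_zero]
      simpa only [overlap_swap (F.letter a _)] using
        hF b a (rival b) (rival a) h.1 (hrival b hb) h.2
    · have hle : ∑ k, overlap (F.letter a k) (F.letter b k) (F.letter (rival a) k)
          (F.letter (rival b) k) ≤ n :=
        (sum_le_sum fun k _ => (abs_le.1 (abs_overlap_le_one _ _ _ _)).2).trans_eq (by simp [n])
      rw [if_pos h]
      linarith [show 0 ≤ n * η by positivity]
  have hexcept : (#{b ∈ B | ¬(BothDiffer b a ∧ BothDiffer b (rival a))} : ℝ) ≤
      2 * (Fintype.card I + Fintype.card J) := by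
    exact_mod_cast card_le_of_forall_not_bothDiffer fun b hb => (mem_filter.1 hb).2
  calc _ ≤ ∑ b ∈ B, (n * η + if ¬(BothDiffer b a ∧ BothDiffer b (rival a)) then n else 0) :=
        sum_le_sum hterm
    _ = #B * (n * η) + #{b ∈ B | ¬(BothDiffer b a ∧ BothDiffer b (rival a))} * n := by
        rw [sum_add_distrib, sum_const, nsmul_eq_mul, ← sum_filter, sum_const, nsmul_eq_mul]
    _ ≤ #B * (n * η) + 2 * (Fintype.card I + Fintype.card J) * n := by gcongr
    _ = _ := by ring

/-- If the codewords of many message pairs scored low, Bessel's inequality would make them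
correlated. -/
theorem Codebook.OverlapLE.sq_mul_card_le [Nonempty K] {F : Codebook K I J X Y} {η δ : ℝ}
    (hF : F.OverlapLE η) (hη : 0 ≤ η) (hδ : 0 ≤ δ)
    (hηδ : (Fintype.card (X × Y) : ℝ) ^ 2 * η ≤ δ ^ 2 / 2)
    {H : K → X × Y → X × Y → ℝ} (hH : ∀ k a b, |H k a b| ≤ 1)
    (hmean : ∀ b, Fintype.card K * (2 * δ) ≤ ∑ k, 𝔼 a, H k a (F.letter b k))
    {B : Finset (I × J)} (hB : ∀ a ∈ B, ∃ b, BothDiffer a b ∧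
      ∑ k, H k (F.letter a k) (F.letter b k) ≤ Fintype.card K * δ) :
    δ ^ 2 * #B ≤ 4 * (Fintype.card (X × Y) : ℝ) ^ 2 * (Fintype.card I + Fintype.card J) := by
  choose! rival hrival hlow using hB
  have : (0 : ℝ) < Fintype.card K := Nat.cast_pos.2 Fintype.card_pos
  have hbessel := sq_card_mul_le_sum_overlap B F.letter (fun a => F.letter (rival a)) hH hδ
    fun a ha => by linarith [hlow a ha, hmean (rival a)]
  have hgram := sum_le_sum fun a (_ : a ∈ B) => hF.sum_overlap_le hη hrival a
  rw [sum_const, nsmul_eq_mul] at hgram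
  rcases B.eq_empty_or_nonempty with rfl | hne
  · simp only [card_empty, CharP.cast_eq_zero, mul_zero]
    positivity
  have hcard : (0 : ℝ) < #B := Nat.cast_pos.2 hne.card_pos
  have hcancel : #B * (Fintype.card K : ℝ) ^ 2 * (δ ^ 2 * #B) ≤
      #B * (Fintype.card K : ℝ) ^ 2 * ((Fintype.card (X × Y) : ℝ) ^ 2 *
        (#B * η + 2 * (Fintype.card I + Fintype.card J))) := by
    linarith [hbessel.trans (mul_le_mul_of_nonneg_left hgram (by positivity))]
  linarith [le_of_mul_le_mul_left hcancel (by positivity),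
    mul_le_mul_of_nonneg_left hηδ hcard.le]

end BalancedCodebook

/-! ### Tests and the tournament decoder -/

section Test

variable {A P Q S Z : Type*} [Fintype A] [Fintype Z]

/-- The mean of the test `H a b` when the letter `a` is sent through `W` in the state `s`. -/
def meanTest (W : A → S → Z → ℝ) (H : A → A → Z → ℝ) (a b : A) (s : S) : ℝ :=
  ∑ z, W a s z * H a b z

/-- The smallest mean, over all states, of the test against `b` when a uniformly random letter is
sent through `W`. -/
def worstMean (W : A → S → Z → ℝ) (H : A → A → Z → ℝ) (b : A) : ℝ :=
  ⨅ s, 𝔼 a, meanTest W H a b s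

/-- The tests `H` recognize a random letter sent through `W` against an independent random letter,
even if the state is chosen knowing the latter. -/
def Separates (W : A → S → Z → ℝ) (H : A → A → Z → ℝ) : Prop :=
  0 < 𝔼 b, worstMean W H b

theorem Separates.comp_equiv {B : Type*} [Fintype B] {W : A → S → Z → ℝ} {H : A → A → Z → ℝ}
    (h : Separates W H) (e : B ≃ A) : Separates (fun b => W (e b)) fun b b' => H (e b) (e b') := by
  have hworst : ∀ b, worstMean (fun b => W (e b)) (fun b b' => H (e b) (e b')) b =
      worstMean W H (e b) := fun b =>
    iInf_congr fun s => Fintype.expect_equiv e _ (fun a => meanTest W H a (e b) s) fun _ => rfl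
  rwa [Separates, Fintype.expect_equiv e _ (worstMean W H) hworst]

variable {W : A → S → Z → ℝ} {H : A → A → Z → ℝ}

theorem abs_expect_meanTest_le_one [Nonempty A] (hW : ∀ a s, W a s ∈ stdSimplex ℝ Z)
    (hH : ∀ a b z, |H a b z| ≤ 1) (b : A) (s : S) : |𝔼 a, meanTest W H a b s| ≤ 1 :=
  (abs_expect_le _ _).trans
    (expect_le univ_nonempty fun a _ => abs_sum_mul_le_one (hW a s) (hH a b))

theorem worstMean_le [Nonempty A] (hW : ∀ a s, W a s ∈ stdSimplex ℝ Z)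
    (hH : ∀ a b z, |H a b z| ≤ 1) (b : A) (s : S) :
    worstMean W H b ≤ 𝔼 a, meanTest W H a b s :=
  ciInf_le ⟨-1, by
    rintro _ ⟨s, rfl⟩
    exact (abs_le.1 (abs_expect_meanTest_le_one hW hH b s)).1⟩ s

theorem abs_worstMean_le_one [Nonempty A] [Nonempty S] (hW : ∀ a s, W a s ∈ stdSimplex ℝ Z)
    (hH : ∀ a b z, |H a b z| ≤ 1) (b : A) : |worstMean W H b| ≤ 1 := by
  have hbound := fun s => abs_le.1 (abs_expect_meanTest_le_one hW hH b s)
  exact abs_le.2 ⟨le_ciInf fun s => (hbound s).1,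
    (worstMean_le hW hH b (Classical.arbitrary S)).trans (hbound _).2⟩

/-- Bounded tests between two values `p` and `p'` of an unknown parameter, given the value `q` of
another one; positive values speak for `p`. -/
structure AntisymmTest (P Q Z : Type*) where
  /-- The value of the test of `p` against `p'` given `q`, at the output `z`. -/
  toFun : P → P → Q → Z → ℝ
  abs_le_one : ∀ p p' q z, |toFun p p' q z| ≤ 1
  antisymm : ∀ p p' q z, toFun p p' q z = -toFun p' p q z

/-- The test between the first components of two pairs, which trusts the second component of the
first pair. -/
def AntisymmTest.onPairs (h : AntisymmTest P Q Z) (a b : P × Q) : Z → ℝ :=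
  h.toFun a.1 b.1 a.2

end Test

section Decoder

theorem exists_decoder {A Ω : Type*} [Nonempty A] {g : A → A → Ω → ℝ}
    (hg : ∀ a b z, g a b z = -g b a z) :
    ∃ dec : Ω → A, ∀ a z, (∀ b, b ≠ a → 0 < g a b z) → dec z = a := by
  classical
  refine ⟨fun z => if hz : ∃ a, ∀ b, b ≠ a → 0 < g a b z then hz.choose else
    Classical.arbitrary A, fun a z ha => ?_⟩
  have hz : ∃ a, ∀ b, b ≠ a → 0 < g a b z := ⟨a, ha⟩
  simp only [dif_pos hz]
  by_contra hne
  linarith [hz.choose_spec a (Ne.symm hne), ha _ hne, hg a hz.choose z]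

variable {A K Z : Type*} [Fintype A] [Fintype K] [Fintype Z]

theorem one_sub_le_sum_of_forall_pos {p : K → Z → ℝ} (hp : ∀ k, p k ∈ stdSimplex ℝ Z)
    {g : A → K → Z → ℝ} (hg : ∀ b k z, |g b k z| ≤ 1) {δ : ℝ} (hδ : 0 ≤ δ) {t : Finset A}
    (hmean : ∀ b ∈ t, Fintype.card K * δ ≤ ∑ k, ∑ z, p k z * g b k z) {D : Finset (K → Z)}
    (hD : ∀ z, (∀ b ∈ t, 0 < ∑ k, g b k (z k)) → z ∈ D) :
    1 - Fintype.card A * Real.exp (-(Fintype.card K * (δ ^ 2 / 2))) ≤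
      ∑ z ∈ D, ∏ k, p k (z k) := by
  classical
  let lost (b : A) : Finset (K → Z) := {z | ∑ k, g b k (z k) ≤ 0}
  have hlost : ∀ b ∈ t, ∑ z ∈ lost b, ∏ k, p k (z k) ≤
      Real.exp (-(Fintype.card K * (δ ^ 2 / 2))) := fun b hb =>
    sum_prod_le_exp_of_mul_le_sum (g := fun k z => -g b k z) (μ := -δ) hp
      (fun k z => by simpa using hg b k z) hδ
      (by simpa only [mul_neg, sum_neg_distrib, neg_le_neg_iff] using hmean b hb)
      fun z hz => by simpa using (mem_filter.1 hz).2
  have hunion := one_sub_sum_le_of_forall_mem (prod_mem_stdSimplex hp) t lost D fun z hz =>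
    hD z fun b hb => not_le.1 fun hle => hz b hb (mem_filter.2 ⟨mem_univ _, hle⟩)
  have hsum := (sum_le_sum hlost).trans_eq (by rw [sum_const, nsmul_eq_mul])
  have hcard : (#t : ℝ) ≤ Fintype.card A := Nat.cast_le.2 (card_le_univ t)
  linarith [mul_le_mul_of_nonneg_right hcard
    (Real.exp_pos (-(Fintype.card K * (δ ^ 2 / 2)))).le]

theorem one_sub_le_expect [Nonempty A] {f : A → ℝ} (hf : ∀ a, 0 ≤ f a) {ε : ℝ} (hε : 0 ≤ ε)
    {B : Finset A} (hB : ∀ a, a ∉ B → 1 - ε ≤ f a) :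
    1 - #B / Fintype.card A - ε ≤ 𝔼 a, f a := by
  classical
  calc 1 - #B / Fintype.card A - ε = 𝔼 a, (1 - (if a ∈ B then 1 else 0) - ε) := by
        simp [expect_sub_distrib, Fintype.expect_eq_sum_div_card]
    _ ≤ _ := expect_le_expect fun a _ => by
        split_ifs with ha
        · linarith [hf a]
        · linarith [hB a ha]

end Decoder

section Codes

variable {K I J S X Y Z : Type*}

/-- Tests for the three ways in which two pairs can differ: in the first component only, in the
second component only, or in both. -/
structure TestFamily (X Y Z : Type*) where
  /-- The test used when the second components agree. -/
  fst : AntisymmTest X Y Z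
  /-- The test used when the first components agree. -/
  snd : AntisymmTest Y X Z
  /-- The test used when both components differ. -/
  both : AntisymmTest (X × Y) Unit Z

namespace TestFamily

/-- The three tests, all viewed as tests between pairs. -/
def kernel (T : TestFamily X Y Z) : Fin 3 → X × Y → X × Y → Z → ℝ :=
  ![T.fst.onPairs, fun a b => T.snd.onPairs a.swap b.swap,
    fun a b => T.both.onPairs (a, ()) (b, ())]

theorem abs_kernel_le_one (T : TestFamily X Y Z) (t : Fin 3) (a b : X × Y) (z : Z) :
    |T.kernel t a b z| ≤ 1 := by
  fin_cases t
  exacts [T.fst.abs_le_one .., T.snd.abs_le_one .., T.both.abs_le_one ..]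

variable [DecidableEq I] [DecidableEq J]

/-- The evidence of the letter `z`, received at position `k`, for the message pair `a` and
against `b`. -/
def score (T : TestFamily X Y Z) (F : Codebook K I J X Y) (a b : I × J) (k : K) : Z → ℝ :=
  T.kernel (if a.2 = b.2 then 0 else if a.1 = b.1 then 1 else 2) (F.letter a k) (F.letter b k)

theorem score_antisymm (T : TestFamily X Y Z) (F : Codebook K I J X Y) (a b : I × J) (k : K)
    (z : Z) : T.score F a b k z = -T.score F b a k z := by
  by_cases h₂ : a.2 = b.2
  · simpa [score, h₂, kernel, AntisymmTest.onPairs, Codebook.letter] using T.fst.antisymm _ _ _ z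
  by_cases h₁ : a.1 = b.1
  · simpa [score, h₁, h₂, Ne.symm h₂, kernel, AntisymmTest.onPairs, Codebook.letter] using
      T.snd.antisymm _ _ _ z
  · simpa [score, h₁, h₂, Ne.symm h₁, Ne.symm h₂, kernel, AntisymmTest.onPairs] using
      T.both.antisymm _ _ _ z

/-- Where two message pairs agree in a component, the score between them is that of a test which
ignores this component of the second pair; so that component may be altered. -/
theorem exists_bothDiffer_score_eq [Nontrivial I] [Nontrivial J] (T : TestFamily X Y Z)
    (F : Codebook K I J X Y) {a b : I × J} (hab : b ≠ a) :
    ∃ t c, BothDiffer a c ∧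
      ∀ k, T.score F a b k = T.kernel t (F.letter a k) (F.letter c k) := by
  by_cases h₂ : a.2 = b.2
  · obtain ⟨j, hj⟩ := exists_ne a.2
    have h₁ : a.1 ≠ b.1 := fun h => hab (Prod.ext h.symm h₂.symm)
    exact ⟨0, (b.1, j), ⟨h₁, hj.symm⟩, fun k => by rw [score, if_pos h₂]; rfl⟩
  by_cases h₁ : a.1 = b.1
  · obtain ⟨i, hi⟩ := exists_ne a.1
    exact ⟨1, (i, b.2), ⟨hi.symm, h₂⟩, fun k => by rw [score, if_neg h₂, if_pos h₁]; rfl⟩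
  · exact ⟨2, b, ⟨h₁, h₂⟩, fun k => by rw [score, if_neg h₂, if_neg h₁]⟩

end TestFamily

variable [Fintype K] [Fintype I] [Fintype J] [DecidableEq I] [DecidableEq J] [Fintype Z]
  {F : Codebook K I J X Y} {T : TestFamily X Y Z} {W : X × Y → S → Z → ℝ} {η δ : ℝ}

open Classical in
/-- The message pairs whose codewords, in the states `s`, fail to score at least `δ` per letter
against some message pair differing in both components. -/
def Codebook.unreliable (F : Codebook K I J X Y) (T : TestFamily X Y Z) (W : X × Y → S → Z → ℝ)
    (s : K → S) (δ : ℝ) : Finset (I × J) :=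
  univ.biUnion fun t => {a | ∃ b, BothDiffer a b ∧
    ∑ k, meanTest W (T.kernel t) (F.letter a k) (F.letter b k) (s k) ≤ Fintype.card K * δ}

theorem one_sub_le_sum_of_notMem_unreliable [Nontrivial I] [Nontrivial J] (hδ : 0 ≤ δ)
    (hW : ∀ a s, W a s ∈ stdSimplex ℝ Z) {s : K → S} {a : I × J}
    (ha : a ∉ F.unreliable T W s δ) {D : Finset (K → Z)}
    (hD : ∀ z, (∀ b, b ≠ a → 0 < ∑ k, T.score F a b k (z k)) → z ∈ D) :
    1 - Fintype.card (I × J) * Real.exp (-(Fintype.card K * (δ ^ 2 / 2))) ≤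
      ∑ z ∈ D, ∏ k, W (F.letter a k) (s k) (z k) := by
  classical
  refine one_sub_le_sum_of_forall_pos (t := {b | b ≠ a}) (g := T.score F a) (fun k => hW _ _)
    (fun b k z => T.abs_kernel_le_one _ _ _ z) hδ (fun b hb => ?_) (by simpa using hD)
  obtain ⟨t, c, hac, hscore⟩ := T.exists_bothDiffer_score_eq F (mem_filter.1 hb).2
  by_contra! hlt
  exact ha (mem_biUnion.2 ⟨t, mem_univ _, mem_filter.2 ⟨mem_univ _, c, hac, by
    simpa only [meanTest, hscore] using hlt.le⟩⟩)

variable [Fintype X] [Fintype Y] [DecidableEq X] [DecidableEq Y] [Nonempty X] [Nonempty Y]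

theorem Codebook.OverlapLE.sq_mul_card_unreliable_le [Nonempty K] (hF : F.OverlapLE η)
    (hη : 0 ≤ η) (hδ : 0 ≤ δ) (hηδ : (Fintype.card (X × Y) : ℝ) ^ 2 * η ≤ δ ^ 2 / 2)
    (hW : ∀ a s, W a s ∈ stdSimplex ℝ Z)
    (hmean : ∀ t b, Fintype.card K * (2 * δ) ≤ ∑ k, worstMean W (T.kernel t) (F.letter b k))
    (s : K → S) :
    δ ^ 2 * #(F.unreliable T W s δ) ≤
      12 * (Fintype.card (X × Y) : ℝ) ^ 2 * (Fintype.card I + Fintype.card J) := by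
  classical
  have hbad : ∀ t, δ ^ 2 * #{a | ∃ b, BothDiffer a b ∧ ∑ k, meanTest W (T.kernel t)
      (F.letter a k) (F.letter b k) (s k) ≤ Fintype.card K * δ} ≤
      4 * (Fintype.card (X × Y) : ℝ) ^ 2 * (Fintype.card I + Fintype.card J) := fun t =>
    hF.sq_mul_card_le hη hδ hηδ (H := fun k a b => meanTest W (T.kernel t) a b (s k))
      (fun k a b => abs_sum_mul_le_one (hW a (s k)) (T.abs_kernel_le_one t a b))
      (fun b => (hmean t b).trans <| sum_le_sum fun k _ =>
        worstMean_le hW (T.abs_kernel_le_one t) _ (s k))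
      fun a ha => (mem_filter.1 ha).2
  have hunion : (#(F.unreliable T W s δ) : ℝ) ≤ ∑ t, (#{a | ∃ b, BothDiffer a b ∧ ∑ k,
      meanTest W (T.kernel t) (F.letter a k) (F.letter b k) (s k) ≤ Fintype.card K * δ} : ℝ) := by
    exact_mod_cast card_biUnion_le
  rw [Fin.sum_univ_three] at hunion
  linarith [mul_le_mul_of_nonneg_left hunion (sq_nonneg δ), hbad 0, hbad 1, hbad 2]

theorem Codebook.OverlapLE.exists_decoder_le_expect [DecidableEq K] [Nonempty K] [Nontrivial I]
    [Nontrivial J] (hF : F.OverlapLE η) (hη : 0 ≤ η) (hδ : 0 < δ)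
    (hηδ : (Fintype.card (X × Y) : ℝ) ^ 2 * η ≤ δ ^ 2 / 2)
    (hW : ∀ a s, W a s ∈ stdSimplex ℝ Z)
    (hmean : ∀ t b, Fintype.card K * (2 * δ) ≤ ∑ k, worstMean W (T.kernel t) (F.letter b k)) :
    ∃ dec : (K → Z) → I × J, ∀ s : K → S,
      1 - 12 * (Fintype.card (X × Y) : ℝ) ^ 2 / δ ^ 2 *
          ((Fintype.card I + Fintype.card J) / Fintype.card (I × J)) -
        Fintype.card (I × J) * Real.exp (-(Fintype.card K * (δ ^ 2 / 2))) ≤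
      𝔼 a, ∑ z with dec z = a, ∏ k, W (F.letter a k) (s k) (z k) := by
  obtain ⟨dec, hdec⟩ := exists_decoder (g := fun a b (z : K → Z) => ∑ k, T.score F a b k (z k))
    fun a b z => by simp only [T.score_antisymm F a b, sum_neg_distrib]
  refine ⟨dec, fun s => ?_⟩
  have hsuccess := one_sub_le_expect (B := F.unreliable T W s δ)
    (f := fun a => ∑ z with dec z = a, ∏ k, W (F.letter a k) (s k) (z k))
    (fun a => sum_nonneg fun z _ => prod_nonneg fun k _ => (hW _ _).1 _) (by positivity)
    fun a ha => one_sub_le_sum_of_notMem_unreliable hδ.le hW ha (by simpa using hdec a)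
  have hbad : (#(F.unreliable T W s δ) : ℝ) ≤
      12 * (Fintype.card (X × Y) : ℝ) ^ 2 / δ ^ 2 * (Fintype.card I + Fintype.card J) := by
    rw [div_mul_eq_mul_div, le_div_iff₀' (by positivity)]
    exact hF.sq_mul_card_unreliable_le hη hδ.le hηδ hW hmean s
  rw [← mul_div_assoc]
  linarith [div_le_div_of_nonneg_right hbad (Nat.cast_nonneg (Fintype.card (I × J)))]

end Codes

/-! ### The coding theorem for separated channels -/

section CodingTheorem

theorem tendsto_ceil_exp_atTop {r : ℝ} (hr : 0 < r) :
    Tendsto (fun n : ℕ => ⌈Real.exp (n * r)⌉₊) atTop atTop :=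
  tendsto_nat_ceil_atTop.comp <| Real.tendsto_exp_atTop.comp <|
    tendsto_natCast_atTop_atTop.atTop_mul_const hr

theorem tendsto_ceil_exp_pow_mul_exp {r c : ℝ} (hr : 0 ≤ r) (j : ℕ) (hc : j * r < c) :
    Tendsto (fun n : ℕ => (⌈Real.exp (n * r)⌉₊ : ℝ) ^ j * Real.exp (-(n * c))) atTop (𝓝 0) := by
  have hlim : Tendsto (fun n : ℕ => 2 ^ j * Real.exp (-(n * (c - j * r)))) atTop (𝓝 0) := by
    simpa using (Real.tendsto_exp_neg_atTop_nhds_zero.comp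
      (tendsto_natCast_atTop_atTop.atTop_mul_const (sub_pos.2 hc))).const_mul (2 ^ j)
  refine squeeze_zero (fun n => by positivity) (fun n => ?_) hlim
  have hexp : 1 ≤ Real.exp (n * r) := Real.one_le_exp (by positivity)
  have hceil : (⌈Real.exp (n * r)⌉₊ : ℝ) ≤ 2 * Real.exp (n * r) := by
    linarith [Nat.ceil_lt_add_one (Real.exp_pos (n * r)).le]
  calc (⌈Real.exp (n * r)⌉₊ : ℝ) ^ j * Real.exp (-(n * c))
      ≤ (2 * Real.exp (n * r)) ^ j * Real.exp (-(n * c)) := by gcongr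
    _ = _ := by
        rw [mul_pow, ← Real.exp_nat_mul, mul_assoc, ← Real.exp_add]
        congr 2
        ring

theorem tendsto_ceil_exp_error {r c : ℝ} (hr : 0 < r) (hc : 2 * r < c) (b : ℝ) :
    Tendsto (fun n : ℕ => b * ((⌈Real.exp (n * r)⌉₊ + ⌈Real.exp (n * r)⌉₊ : ℝ) /
      (⌈Real.exp (n * r)⌉₊ * ⌈Real.exp (n * r)⌉₊ : ℝ)) +
      (⌈Real.exp (n * r)⌉₊ * ⌈Real.exp (n * r)⌉₊ : ℝ) * Real.exp (-(n * c))) atTop (𝓝 0) := by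
  have hinv : Tendsto (fun n : ℕ => 2 * b * (⌈Real.exp (n * r)⌉₊ : ℝ)⁻¹) atTop (𝓝 0) := by
    simpa using (tendsto_inv_atTop_zero.comp
      (tendsto_natCast_atTop_atTop.comp (tendsto_ceil_exp_atTop hr))).const_mul (2 * b)
  have hpow := tendsto_ceil_exp_pow_mul_exp hr.le 2 (by exact_mod_cast hc)
  simpa only [add_zero] using (hinv.add hpow).congr fun n => by
    have : (⌈Real.exp (n * r)⌉₊ : ℝ) ≠ 0 :=
      Nat.cast_ne_zero.2 (Nat.ceil_pos.2 (Real.exp_pos _)).ne'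
    field_simp
    ring

variable {S X Y Z : Type*} [Fintype X] [Fintype Y] [Fintype Z]

theorem exists_pos_three_mul_le_expect {W : X × Y → S → Z → ℝ} {T : TestFamily X Y Z}
    (hT : ∀ t, Separates W (T.kernel t)) :
    ∃ δ : ℝ, 0 < δ ∧ ∀ t, 3 * δ ≤ 𝔼 b, worstMean W (T.kernel t) b := by
  obtain ⟨t₀, ht₀⟩ := Finite.exists_min fun t => 𝔼 b, worstMean W (T.kernel t) b
  exact ⟨(𝔼 b, worstMean W (T.kernel t₀) b) / 3, div_pos (hT t₀) three_pos, fun t => by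
    linarith [ht₀ t]⟩

variable [Nonempty X] [Nonempty Y]

theorem exists_code_le_expect [Nonempty S] {K I J : Type*} [Fintype K] [DecidableEq K] [Nonempty K]
    [Fintype I] [Fintype J] [DecidableEq I] [DecidableEq J] [Nontrivial I] [Nontrivial J]
    {W : X × Y → S → Z → ℝ} (hW : ∀ a s, W a s ∈ stdSimplex ℝ Z) {T : TestFamily X Y Z} {δ η : ℝ}
    (hδ : 0 < δ) (hT : ∀ t, 3 * δ ≤ 𝔼 b, worstMean W (T.kernel t) b) (hη : 0 ≤ η)
    (hη₁ : 2 * η ≤ δ) (hη₂ : (Fintype.card (X × Y) : ℝ) ^ 2 * η ≤ δ ^ 2 / 2)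
    (hlt : 4 * (Fintype.card (I × J) : ℝ) ^ 4 * Real.exp (-(Fintype.card K * (η ^ 2 / 2))) < 1) :
    ∃ (F : Codebook K I J X Y) (dec : (K → Z) → I × J), ∀ s : K → S,
      1 - 12 * (Fintype.card (X × Y) : ℝ) ^ 2 / δ ^ 2 *
          ((Fintype.card I + Fintype.card J) / Fintype.card (I × J)) -
        Fintype.card (I × J) * Real.exp (-(Fintype.card K * (δ ^ 2 / 2))) ≤
      𝔼 a, ∑ z with dec z = a, ∏ k, W (F.letter a k) (s k) (z k) := by
  classical
  obtain ⟨F, hF, hmean⟩ := exists_codebook_overlapLE_and_le_sum (K := K) (I := I) (J := J)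
    (fun t b => abs_worstMean_le_one hW (T.abs_kernel_le_one t) b) hη
    (by simpa only [Fintype.card_fin, Nat.cast_ofNat, show (3 + 1 : ℝ) = 4 by norm_num] using hlt)
  exact ⟨F, hF.exists_decoder_le_expect hη hδ hη₂ hW fun t b => (hmean t b).trans' <| by
    gcongr
    linarith [hT t]⟩

theorem exists_rate_forall_eventually_code [Nonempty S] {W : X × Y → S → Z → ℝ}
    (hW : ∀ a s, W a s ∈ stdSimplex ℝ Z) {T : TestFamily X Y Z}
    (hT : ∀ t, Separates W (T.kernel t)) :
    ∃ r : ℝ, 0 < r ∧ ∀ β : ℝ, 0 < β → ∀ᶠ n : ℕ in atTop, ∃ M : ℕ, Real.exp (n * r) ≤ M ∧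
      ∃ (F : Codebook (Fin n) (Fin M) (Fin M) X Y) (dec : (Fin n → Z) → Fin M × Fin M),
        ∀ s : Fin n → S, 1 - β < 𝔼 a, ∑ z with dec z = a, ∏ k, W (F.letter a k) (s k) (z k) := by
  obtain ⟨δ, hδ, hδT⟩ := exists_pos_three_mul_le_expect hT
  set c : ℝ := (Fintype.card (X × Y) : ℝ)
  have : 0 < c := Nat.cast_pos.2 Fintype.card_pos
  obtain ⟨η, hη, hη₁, hη₂⟩ : ∃ η : ℝ, 0 < η ∧ 2 * η ≤ δ ∧ c ^ 2 * η ≤ δ ^ 2 / 2 :=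
    ⟨min (δ / 2) (δ ^ 2 / 2 / c ^ 2), by positivity, (le_div_iff₀' two_pos).1 (min_le_left _ _),
      (le_div_iff₀' (by positivity)).1 (min_le_right _ _)⟩
  obtain ⟨r, hr, hrδ, hrη⟩ : ∃ r : ℝ, 0 < r ∧ 2 * r < δ ^ 2 / 2 ∧ (8 : ℕ) * r < η ^ 2 / 2 := by
    have hη2 : 0 < η ^ 2 := by positivity
    refine ⟨η ^ 2 / 32, by positivity, ?_, by push_cast; linarith⟩
    linarith [pow_le_pow_left₀ (by positivity) hη₁ 2]
  refine ⟨r, hr, fun β hβ => ?_⟩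
  have hM := (tendsto_ceil_exp_atTop hr).eventually_ge_atTop 2
  have hbook := (tendsto_ceil_exp_pow_mul_exp hr.le 8 hrη).eventually_lt_const
    (show (0 : ℝ) < 1 / 4 by norm_num)
  have herror := (tendsto_ceil_exp_error hr hrδ (12 * c ^ 2 / δ ^ 2)).eventually_lt_const hβ
  filter_upwards [hM, hbook, herror, eventually_ge_atTop 1] with n hM hbook herror hn
  refine ⟨_, Nat.le_ceil _, ?_⟩
  have := Fin.nontrivial_iff_two_le.2 hM
  have : Nonempty (Fin n) := Fin.pos_iff_nonempty.1 hn
  obtain ⟨F, dec, hdec⟩ := exists_code_le_expect (K := Fin n) (I := Fin ⌈Real.exp (n * r)⌉₊)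
    (J := Fin ⌈Real.exp (n * r)⌉₊) hW hδ hδT hη.le hη₁ hη₂ (by
      simp only [Fintype.card_prod, Fintype.card_fin, Nat.cast_mul]
      linarith)
  refine ⟨F, dec, fun s => lt_of_lt_of_le ?_ (hdec s)⟩
  simp only [Fintype.card_prod (Fin _) (Fin _), Fintype.card_fin, Nat.cast_mul]
  linarith

end CodingTheorem

/-! ### Trace norm and informationally complete measurements -/

section Matrix

open Matrix

variable {m : Type*} [Fintype m]

section TraceNorm

variable [DecidableEq m]

theorem traceNorm_eq_sum_sqrt_eigenvalues (A : Matrix m m ℂ) :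
    traceNorm A = ∑ i, √((isHermitian_conjTranspose_mul_self A).eigenvalues i) := by
  rw [traceNorm, matFun, dif_pos (isHermitian_conjTranspose_mul_self A), trace_mul_comm,
    ← mul_assoc]
  simp [trace_diagonal]

theorem sum_eigenvalues_conjTranspose_mul_self (A : Matrix m m ℂ) :
    ∑ i, (isHermitian_conjTranspose_mul_self A).eigenvalues i = ∑ i, ∑ j, ‖A i j‖ ^ 2 := by
  have htrace : (Aᴴ * A).trace = ((∑ i, ∑ j, ‖A i j‖ ^ 2 : ℝ) : ℂ) := by
    simp only [trace, Matrix.diag, mul_apply, conjTranspose_apply]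
    rw [sum_comm]
    push_cast
    exact sum_congr rfl fun i _ => sum_congr rfl fun j _ => Complex.conj_mul' _
  rw [(isHermitian_conjTranspose_mul_self A).trace_eq_sum_eigenvalues] at htrace
  refine Complex.ofReal_injective (Eq.trans ?_ htrace)
  push_cast
  rfl

theorem traceNorm_nonneg (A : Matrix m m ℂ) : 0 ≤ traceNorm A := by
  rw [traceNorm_eq_sum_sqrt_eigenvalues]
  positivity

theorem norm_apply_le_traceNorm (A : Matrix m m ℂ) (i j : m) : ‖A i j‖ ≤ traceNorm A := by
  refine le_of_sq_le_sq ?_ (traceNorm_nonneg A)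
  calc ‖A i j‖ ^ 2 ≤ ∑ j, ‖A i j‖ ^ 2 :=
        single_le_sum (f := fun j => ‖A i j‖ ^ 2) (fun _ _ => sq_nonneg _) (mem_univ j)
    _ ≤ ∑ i, ∑ j, ‖A i j‖ ^ 2 :=
        single_le_sum (f := fun i => ∑ j, ‖A i j‖ ^ 2) (fun _ _ => by positivity) (mem_univ i)
    _ = ∑ i, √((isHermitian_conjTranspose_mul_self A).eigenvalues i) ^ 2 := by
        rw [← sum_eigenvalues_conjTranspose_mul_self]
        exact sum_congr rfl fun i _ =>
          (Real.sq_sqrt ((posSemidef_conjTranspose_mul_self A).eigenvalues_nonneg i)).symm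
    _ ≤ traceNorm A ^ 2 := by
        rw [traceNorm_eq_sum_sqrt_eigenvalues]
        exact sum_sq_le_sq_sum_of_nonneg fun _ _ => Real.sqrt_nonneg _

theorem traceNorm_le_of_norm_apply_le {A : Matrix m m ℂ} {ε : ℝ} (hε : 0 ≤ ε)
    (hA : ∀ i j, ‖A i j‖ ≤ ε) : traceNorm A ≤ (Fintype.card m : ℝ) ^ 2 * ε := by
  have hsum : ∑ i, ∑ j, ‖A i j‖ ^ 2 ≤ (Fintype.card m * ε) ^ 2 :=
    calc ∑ i, ∑ j, ‖A i j‖ ^ 2 ≤ ∑ _i : m, ∑ _j : m, ε ^ 2 := by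
          gcongr with i _ j _
          exact hA i j
      _ = _ := by simp only [sum_const, card_univ, nsmul_eq_mul]; ring
  have hsqrt : ∀ i, √((isHermitian_conjTranspose_mul_self A).eigenvalues i) ≤
      Fintype.card m * ε := fun i => by
    refine Real.sqrt_le_iff.2 ⟨by positivity, le_trans ?_ hsum⟩
    rw [← sum_eigenvalues_conjTranspose_mul_self]
    exact single_le_sum
      (fun i _ => (posSemidef_conjTranspose_mul_self A).eigenvalues_nonneg i) (mem_univ i)
  rw [traceNorm_eq_sum_sqrt_eigenvalues]
  refine (sum_le_sum fun i _ => hsqrt i).trans_eq ?_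
  simp only [sum_const, card_univ, nsmul_eq_mul]
  ring

end TraceNorm

open scoped MatrixOrder Matrix.Norms.L2Operator in
theorem exists_eq_conjTranspose_mul_self {A : Matrix m m ℂ} (hA : A.PosSemidef) :
    ∃ C : Matrix m m ℂ, A = Cᴴ * C := by
  classical
  exact CStarAlgebra.nonneg_iff_eq_star_mul_self.1 hA.nonneg

theorem trace_mul_nonneg {A B : Matrix m m ℂ} (hA : A.PosSemidef) (hB : B.PosSemidef) :
    0 ≤ (A * B).trace := by
  obtain ⟨C, rfl⟩ := exists_eq_conjTranspose_mul_self hA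
  rw [mul_assoc, trace_mul_comm]
  exact (hB.mul_mul_conjTranspose_same C).trace_nonneg

theorem re_trace_mul_nonneg {A B : Matrix m m ℂ} (hA : A.PosSemidef) (hB : B.PosSemidef) :
    0 ≤ (A * B).trace.re :=
  (Complex.le_def.1 (trace_mul_nonneg hA hB)).1

theorem ofReal_re_trace_mul {A B : Matrix m m ℂ} (hA : A.IsHermitian) (hB : B.IsHermitian) :
    ((A * B).trace.re : ℂ) = (A * B).trace := by
  refine Complex.conj_eq_iff_re.1 ?_
  have := trace_conjTranspose (A * B)
  rw [conjTranspose_mul, hA.eq, hB.eq, trace_mul_comm] at this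
  exact this.symm

theorem norm_apply_le_one_of_isDensity {A : Matrix m m ℂ} (hA : IsDensity A) (i j : m) :
    ‖A i j‖ ≤ 1 := by
  obtain ⟨C, hC⟩ := exists_eq_conjTranspose_mul_self hA.1
  have hcolumn : ∀ i, ∑ k, ‖C k i‖ ^ 2 ≤ 1 := fun i => by
    have hdiag : ∀ i, A.diag i = ((∑ k, ‖C k i‖ ^ 2 : ℝ) : ℂ) := fun i => by
      rw [hC]
      push_cast
      exact sum_congr rfl fun k _ => Complex.conj_mul' _
    have htrace : ∑ i, ∑ k, ‖C k i‖ ^ 2 = 1 := by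
      have := hA.2
      rw [trace, sum_congr rfl fun i _ => hdiag i] at this
      exact_mod_cast this
    rw [← htrace]
    exact single_le_sum (f := fun i => ∑ k, ‖C k i‖ ^ 2) (fun _ _ => by positivity) (mem_univ i)
  calc ‖A i j‖ ≤ ∑ k, ‖C k i‖ * ‖C k j‖ := by
        rw [hC, mul_apply]
        exact (norm_sum_le _ _).trans_eq (by simp)
    _ ≤ ∑ k, (‖C k i‖ ^ 2 + ‖C k j‖ ^ 2) / 2 :=
        sum_le_sum fun k _ => by linarith [two_mul_le_add_sq ‖C k i‖ ‖C k j‖]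
    _ ≤ 1 := by
        rw [← sum_div, sum_add_distrib]
        linarith [hcolumn i, hcolumn j]

section Tomography

variable [DecidableEq m]

/-- The unnormalized vector `eᵢ + iᵗ eⱼ` attached to the outcome `(i, j, t)`. -/
def tomographyVector (z : m × m × Fin 4) : m → ℂ :=
  Pi.single z.1 1 + Complex.I ^ (z.2.2 : ℕ) • Pi.single z.2.1 1

/-- The effects of a measurement whose outcome probabilities determine the measured state: by
polarization, the rank one projections onto the vectors `eᵢ + iᵗ eⱼ` span all matrices. -/
def tomographyEffect (z : m × m × Fin 4) : Matrix m m ℂ :=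
  ((8 * Fintype.card m : ℝ)⁻¹) • vecMulVec (tomographyVector z) (star (tomographyVector z))

theorem posSemidef_tomographyEffect (z : m × m × Fin 4) : (tomographyEffect z).PosSemidef :=
  (posSemidef_vecMulVec_self_star _).smul (by positivity)

theorem trace_tomographyEffect_mul (i j : m) (t : Fin 4) (A : Matrix m m ℂ) :
    (tomographyEffect (i, j, t) * A).trace = (8 * Fintype.card m : ℂ)⁻¹ *
      (A i i + Complex.I ^ (t : ℕ) * A i j + (-Complex.I) ^ (t : ℕ) * A j i + A j j) := by
  have hphase : (-Complex.I) ^ (t : ℕ) * Complex.I ^ (t : ℕ) = 1 := by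
    rw [← mul_pow, neg_mul, Complex.I_mul_I, neg_neg, one_pow]
  rw [tomographyEffect, smul_mul, trace_smul, Complex.real_smul, vecMulVec_mul, trace_vecMulVec,
    tomographyVector, star_add, star_smul, star_pow, Pi.star_single, Pi.star_single, star_one,
    add_vecMul, smul_vecMul, single_one_vecMul, single_one_vecMul,
    show star Complex.I = -Complex.I from Complex.conj_I]
  generalize (-Complex.I) ^ (t : ℕ) = u at *
  generalize Complex.I ^ (t : ℕ) = v at *
  simp only [add_dotProduct, dotProduct_add, smul_dotProduct, dotProduct_smul,
    single_one_dotProduct, row_apply, smul_eq_mul]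
  push_cast
  linear_combination (8 * Fintype.card m : ℂ)⁻¹ * A j j * hphase

theorem neg_I_pow_three : (-Complex.I) ^ 3 = Complex.I := by
  rw [Odd.neg_pow (by decide), Complex.I_pow_three, neg_neg]

theorem sum_tomographyEffect [Nonempty m] : ∑ z : m × m × Fin 4, tomographyEffect z = 1 := by
  refine ext_iff_trace_mul_right.2 fun A => ?_
  have hcard : (Fintype.card m : ℂ) ≠ 0 := Nat.cast_ne_zero.2 Fintype.card_ne_zero
  have hphase : ∀ i j, ∑ t, (tomographyEffect (i, j, t) * A).trace =
      (2 * Fintype.card m : ℂ)⁻¹ * (A i i + A j j) := fun i j => by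
    simp only [trace_tomographyEffect_mul, Fin.sum_univ_four, Fin.coe_ofNat_eq_mod,
      Nat.reduceMod, pow_zero, pow_one, Complex.I_sq, neg_sq, Complex.I_pow_three, neg_I_pow_three]
    field_simp
    ring
  rw [sum_mul, trace_sum, one_mul, Fintype.sum_prod_type]
  simp only [Fintype.sum_prod_type, hphase, ← mul_sum, sum_add_distrib, sum_const, card_univ,
    nsmul_eq_mul]
  rw [trace]
  simp only [Matrix.diag]
  field_simp
  ring

theorem apply_eq_trace_tomographyEffect_mul (A : Matrix m m ℂ) (i j : m) :
    A i j = 2 * Fintype.card m *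
      (((tomographyEffect (i, j, 0) * A).trace - (tomographyEffect (i, j, 2) * A).trace) -
        Complex.I *
          ((tomographyEffect (i, j, 1) * A).trace - (tomographyEffect (i, j, 3) * A).trace)) := by
  have : Nonempty m := ⟨i⟩
  have hcard : (Fintype.card m : ℂ) ≠ 0 := Nat.cast_ne_zero.2 Fintype.card_ne_zero
  simp only [trace_tomographyEffect_mul, Fin.coe_ofNat_eq_mod, Nat.reduceMod, pow_zero, pow_one,
    Complex.I_sq, neg_sq, Complex.I_pow_three, neg_I_pow_three]
  field_simp
  linear_combination 4 * (A i j - A j i) * Complex.I_sq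

theorem norm_apply_le_of_norm_trace_tomographyEffect_mul_le {A : Matrix m m ℂ} {c : ℝ}
    (h : ∀ z, ‖(tomographyEffect z * A).trace‖ ≤ c) (i j : m) :
    ‖A i j‖ ≤ 8 * Fintype.card m * c := by
  rw [apply_eq_trace_tomographyEffect_mul A i j, norm_mul, norm_mul, Complex.norm_natCast,
    Complex.norm_ofNat]
  have hsub : ∀ t u, ‖(tomographyEffect (i, j, t) * A).trace -
      (tomographyEffect (i, j, u) * A).trace‖ ≤ 2 * c := fun t u =>
    (norm_sub_le _ _).trans (by linarith [h (i, j, t), h (i, j, u)])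
  refine (mul_le_mul_of_nonneg_left (norm_sub_le _ _) (by positivity)).trans ?_
  rw [norm_mul, Complex.norm_I, one_mul]
  refine (mul_le_mul_of_nonneg_left (add_le_add (hsub 0 2) (hsub 1 3)) (by positivity)).trans_eq ?_
  ring

theorem traceNorm_le_of_norm_trace_tomographyEffect_mul_le {A : Matrix m m ℂ} {c : ℝ}
    (hc : 0 ≤ c) (h : ∀ z, ‖(tomographyEffect z * A).trace‖ ≤ c) :
    traceNorm A ≤ 8 * (Fintype.card m : ℝ) ^ 3 * c :=
  (traceNorm_le_of_norm_apply_le (by positivity)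
    (norm_apply_le_of_norm_trace_tomographyEffect_mul_le h)).trans_eq (by ring)

/-- The distribution of the outcome when the measurement `tomographyEffect` is performed on `A`. -/
def tomographyLaw (A : Matrix m m ℂ) (z : m × m × Fin 4) : ℝ :=
  (tomographyEffect z * A).trace.re

theorem tomographyLaw_mem_stdSimplex [Nonempty m] {A : Matrix m m ℂ} (hA : IsDensity A) :
    tomographyLaw A ∈ stdSimplex ℝ (m × m × Fin 4) := by
  refine ⟨fun z => re_trace_mul_nonneg (posSemidef_tomographyEffect z) hA.1, ?_⟩
  simp only [tomographyLaw]
  rw [← Complex.re_sum, ← trace_sum, ← sum_mul, sum_tomographyEffect, one_mul, hA.2,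
    Complex.one_re]

end Tomography

end Matrix

/-! ### Separating tests for channels that are not symmetrizable -/

section Duality

theorem exists_bounded_separating_functional {L : Type*} [Fintype L] {C : Set (L → ℝ)}
    (hC : Convex ℝ C) {c : ℝ} (hc : 0 < c) (h : ∀ v ∈ C, ∃ l, c ≤ |v l|) :
    ∃ g : L → ℝ, (∀ l, |g l| ≤ 1 / 2) ∧ ∃ δ, 0 < δ ∧ ∀ v ∈ C, δ ≤ ∑ l, g l * v l := by
  classical
  have hzero : (0 : L → ℝ) ∉ closure C := fun h0 => by
    obtain ⟨v, hv, hdist⟩ := Metric.mem_closure_iff.1 h0 c hc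
    obtain ⟨l, hl⟩ := h v hv
    rw [dist_zero_left] at hdist
    exact (hl.trans (norm_le_pi_norm v l)).not_gt hdist
  obtain ⟨f, u, hu, hf⟩ := geometric_hahn_banach_point_closed hC.closure isClosed_closure hzero
  rw [map_zero] at hu
  let G : L → ℝ := fun l => f (Pi.single l 1)
  have hfG : ∀ v, f v = ∑ l, G l * v l := fun v => by
    conv_lhs => rw [← univ_sum_single v, map_sum]
    refine sum_congr rfl fun l _ => ?_
    rw [mul_comm, ← smul_eq_mul, ← map_smul, ← Pi.single_smul, smul_eq_mul, mul_one]
  have hB : 0 < 2 * (∑ l, |G l| + 1) := by positivity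
  refine ⟨fun l => G l / (2 * (∑ l, |G l| + 1)), fun l => ?_, u / (2 * (∑ l, |G l| + 1)),
    div_pos hu hB, fun v hv => ?_⟩
  · rw [abs_div, abs_of_pos hB, div_le_iff₀ hB]
    linarith [single_le_sum (f := fun l => |G l|) (fun _ _ => abs_nonneg _) (mem_univ l)]
  · simp only [div_mul_eq_mul_div, ← sum_div]
    gcongr
    rw [← hfG]
    exact (hf v (subset_closure hv)).le

theorem le_expect_iInf {B S : Type*} [Fintype B] [Nonempty B] [Nonempty S] {ψ : B → S → ℝ} {δ : ℝ}
    (h : ∀ σ : B → S, δ ≤ 𝔼 b, ψ b (σ b)) : δ ≤ 𝔼 b, ⨅ s, ψ b s := by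
  refine le_of_forall_pos_le_add fun ε hε => ?_
  choose σ hσ using fun b => exists_lt_of_ciInf_lt (lt_add_of_pos_right (⨅ s, ψ b s) hε)
  calc δ ≤ 𝔼 b, ψ b (σ b) := h σ
    _ ≤ 𝔼 b, ((⨅ s, ψ b s) + ε) := expect_le_expect fun b _ => (hσ b).le
    _ = _ := by rw [expect_add_distrib, expect_const univ_nonempty]

variable {P Q S Z : Type*} [MeasurableSpace S]

/-- How far the measures `U p` are from symmetrizing the channel `W` from `P × Q` to `Z`: the
coordinate `(p, p', q, z)` compares the probabilities of `z` for the inputs `(p, q)` under the state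
distribution `U p'` and `(p', q)` under `U p`. -/
def asymmetry (W : P → Q → S → Z → ℝ) (U : P → Measure S) (l : P × P × Q × Z) : ℝ :=
  ∫ s, W l.1 l.2.2.1 s l.2.2.2 ∂U l.2.1 - ∫ s, W l.2.1 l.2.2.1 s l.2.2.2 ∂U l.1

variable {W : P → Q → S → Z → ℝ}

theorem asymmetry_dirac (hWm : ∀ p q z, Measurable fun s => W p q s z) (σ : P → S)
    (p p' : P) (q : Q) (z : Z) :
    asymmetry W (fun p => Measure.dirac (σ p)) (p, p', q, z) =
      W p q (σ p') z - W p' q (σ p) z := by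
  simp only [asymmetry]
  rw [integral_dirac' _ _ (hWm p q z).stronglyMeasurable,
    integral_dirac' _ _ (hWm p' q z).stronglyMeasurable]

variable [Fintype Z]

theorem integrable_of_mem_stdSimplex (hWm : ∀ p q z, Measurable fun s => W p q s z)
    (hW : ∀ p q s, W p q s ∈ stdSimplex ℝ Z) (μ : Measure S) [IsFiniteMeasure μ]
    (p : P) (q : Q) (z : Z) :
    Integrable (fun s => W p q s z) μ :=
  Integrable.of_bound (hWm p q z).aestronglyMeasurable 1 <| ae_of_all _ fun s => by
    obtain ⟨h0, h1⟩ := mem_Icc_of_mem_stdSimplex (hW p q s) z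
    rwa [Real.norm_of_nonneg h0]

theorem convex_asymmetry (hWm : ∀ p q z, Measurable fun s => W p q s z)
    (hW : ∀ p q s, W p q s ∈ stdSimplex ℝ Z) :
    Convex ℝ (asymmetry W '' {U | ∀ p, IsProbabilityMeasure (U p)}) := by
  rintro _ ⟨U, hU, rfl⟩ _ ⟨V, hV, rfl⟩ a b ha hb hab
  refine ⟨fun p => ENNReal.ofReal a • U p + ENNReal.ofReal b • V p, fun p => ⟨?_⟩, ?_⟩
  · have := hU p
    have := hV p
    simp only [Measure.add_apply, Measure.smul_apply, measure_univ, smul_eq_mul, mul_one]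
    rw [← ENNReal.ofReal_add ha hb, hab, ENNReal.ofReal_one]
  · have hmix : ∀ p q z p', ∫ s, W p q s z ∂(ENNReal.ofReal a • U p' + ENNReal.ofReal b • V p') =
        a * ∫ s, W p q s z ∂U p' + b * ∫ s, W p q s z ∂V p' := fun p q z p' => by
      have := hU p'
      have := hV p'
      have hint : ∀ (μ : Measure S) [IsFiniteMeasure μ] (t : ℝ),
          Integrable (fun s => W p q s z) (ENNReal.ofReal t • μ) := fun μ _ t =>
        (integrable_of_mem_stdSimplex hWm hW μ p q z).smul_measure ENNReal.ofReal_ne_top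
      rw [integral_add_measure (hint _ a) (hint _ b), integral_smul_measure, integral_smul_measure,
        ENNReal.toReal_ofReal ha, ENNReal.toReal_ofReal hb, smul_eq_mul, smul_eq_mul]
    funext l
    simp only [asymmetry, hmix, Pi.add_apply, Pi.smul_apply, smul_eq_mul]
    ring

/-- The antisymmetrization of a function bounded by `1 / 2`. -/
def AntisymmTest.ofFun (g : P × P × Q × Z → ℝ) (hg : ∀ l, |g l| ≤ 1 / 2) : AntisymmTest P Q Z where
  toFun p p' q z := g (p, p', q, z) - g (p', p, q, z)
  abs_le_one p p' q z :=
    (abs_sub _ _).trans (by linarith [hg (p, p', q, z), hg (p', p, q, z)])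
  antisymm _ _ _ _ := (neg_sub _ _).symm

variable [Fintype P] [Fintype Q]

theorem sum_mul_asymmetry_dirac (hWm : ∀ p q z, Measurable fun s => W p q s z)
    {g : P × P × Q × Z → ℝ} (hg : ∀ l, |g l| ≤ 1 / 2) (σ : P → S) :
    ∑ l, g l * asymmetry W (fun p => Measure.dirac (σ p)) l = ∑ p' : P, ∑ a : P × Q,
      ∑ z, W a.1 a.2 (σ p') z * (AntisymmTest.ofFun g hg).toFun a.1 p' a.2 z := by
  simp only [Fintype.sum_prod_type, asymmetry_dirac hWm, AntisymmTest.ofFun, mul_sub,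
    sum_sub_distrib]
  congr 1
  · rw [sum_comm]
    simp only [mul_comm]
  · simp only [mul_comm]

theorem exists_separates_onPairs [Nonempty P] [Nonempty Q] [Nonempty S]
    (hWm : ∀ p q z, Measurable fun s => W p q s z)
    (hW : ∀ p q s, W p q s ∈ stdSimplex ℝ Z) {c : ℝ} (hc : 0 < c)
    (h : ∀ U : P → Measure S, (∀ p, IsProbabilityMeasure (U p)) → ∃ l, c ≤ |asymmetry W U l|) :
    ∃ T : AntisymmTest P Q Z, Separates (fun a : P × Q => W a.1 a.2) T.onPairs := by
  obtain ⟨g, hg, δ, hδ, hgδ⟩ := exists_bounded_separating_functional (convex_asymmetry hWm hW) hc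
    (Set.forall_mem_image.2 h)
  refine ⟨AntisymmTest.ofFun g hg, ?_⟩
  let ψ : P → S → ℝ := fun p' s =>
    𝔼 a : P × Q, ∑ z, W a.1 a.2 s z * (AntisymmTest.ofFun g hg).toFun a.1 p' a.2 z
  have hσ (σ : P → S) : δ / Fintype.card (P × Q) / Fintype.card P ≤ 𝔼 p', ψ p' (σ p') := by
    simp only [ψ, Fintype.expect_eq_sum_div_card, ← sum_div]
    gcongr
    rw [← sum_mul_asymmetry_dirac hWm hg]
    exact hgδ _ ⟨fun p => Measure.dirac (σ p), fun p => inferInstance, rfl⟩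
  calc (0 : ℝ) < δ / Fintype.card (P × Q) / Fintype.card P := by positivity
    _ ≤ 𝔼 p', ⨅ s, ψ p' s := le_expect_iInf hσ
    _ = 𝔼 p', 𝔼 _q' : Q, ⨅ s, ψ p' s := by simp only [expect_const univ_nonempty]
    _ = _ := (expect_product univ univ fun b : P × Q => ⨅ s, ψ b.1 s).symm

end Duality

section Symmetrizability

variable {P Q S : Type*} [MeasurableSpace S] {d : ℕ}

/-- For every `ε`, some channel from `P` to the states makes the output for the inputs `p` and `q`
under a state chosen by `p'` agree up to `ε` with the output for `p'` and `q` under a state chosen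
by `p`. This is the vanishing of the corresponding `θ`. -/
def ApproxSymmetrizable (r : P → Q → S → Matrix (Fin d) (Fin d) ℂ) : Prop :=
  ∀ ε : ℝ, 0 < ε → ∃ U : P → Measure S, (∀ p, IsProbabilityMeasure (U p)) ∧
    ∀ p p' q, traceNorm (mInt (U p') (r p q) - mInt (U p) (r p' q)) ≤ ε

theorem iInf_eq_zero_iff {ι : Type*} [Nonempty ι] {f : ι → ℝ} (hf : ∀ i, 0 ≤ f i) :
    ⨅ i, f i = 0 ↔ ∀ ε, 0 < ε → ∃ i, f i ≤ ε := by
  refine ⟨fun h ε hε => ?_, fun h => le_antisymm (le_of_forall_pos_le_add fun ε hε => ?_)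
    (Real.iInf_nonneg hf)⟩
  · obtain ⟨i, hi⟩ := exists_lt_of_ciInf_lt (h.trans_lt hε)
    exact ⟨i, hi.le⟩
  · obtain ⟨i, hi⟩ := h ε hε
    exact (ciInf_le ⟨0, Set.forall_mem_range.2 hf⟩ i).trans (by rwa [zero_add])

theorem iSup_le_iff_of_nonneg {ι : Type*} [Finite ι] {f : ι → ℝ} {ε : ℝ} (hε : 0 ≤ ε) :
    ⨆ i, f i ≤ ε ↔ ∀ i, f i ≤ ε :=
  ⟨fun h i => (le_ciSup (Set.finite_range f).bddAbove i).trans h, fun h => Real.iSup_le h hε⟩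

section Theta

variable {𝒳 𝒴 : Type*} [Finite 𝒳] [Finite 𝒴] [Nonempty S]
  (ρ : 𝒳 → 𝒴 → S → Matrix (Fin d) (Fin d) ℂ)

instance nonempty_probabilityFamily :
    Nonempty {U : P → Measure S // ∀ p, IsProbabilityMeasure (U p)} :=
  ⟨fun _ => Measure.dirac (Classical.arbitrary S), fun _ => inferInstance⟩

theorem theta1_eq_zero_iff : theta1 ρ = 0 ↔ ApproxSymmetrizable ρ := by
  rw [theta1, iInf_eq_zero_iff fun U => Real.iSup_nonneg fun _ => Real.iSup_nonneg fun _ =>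
    Real.iSup_nonneg fun _ => traceNorm_nonneg _]
  refine forall₂_congr fun ε hε => ?_
  simp only [Subtype.exists, iSup_le_iff_of_nonneg hε.le, exists_prop]

theorem theta2_eq_zero_iff : theta2 ρ = 0 ↔ ApproxSymmetrizable fun y x => ρ x y := by
  rw [theta2, iInf_eq_zero_iff fun U => Real.iSup_nonneg fun _ => Real.iSup_nonneg fun _ =>
    Real.iSup_nonneg fun _ => traceNorm_nonneg _]
  refine forall₂_congr fun ε hε => ?_
  simp only [Subtype.exists, iSup_le_iff_of_nonneg hε.le, exists_prop]
  exact exists_congr fun U => and_congr_right fun _ =>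
    ⟨fun h y y' x => h x y y', fun h x y y' => h y y' x⟩

theorem theta3_eq_zero_iff :
    theta3 ρ = 0 ↔ ApproxSymmetrizable fun (a : 𝒳 × 𝒴) (_ : Unit) => ρ a.1 a.2 := by
  have : Nonempty {U : 𝒳 → 𝒴 → Measure S // ∀ x y, IsProbabilityMeasure (U x y)} :=
    ⟨fun _ _ => Measure.dirac (Classical.arbitrary S), fun _ _ => inferInstance⟩
  rw [theta3, iInf_eq_zero_iff fun U => Real.iSup_nonneg fun _ => Real.iSup_nonneg fun _ =>
    Real.iSup_nonneg fun _ => Real.iSup_nonneg fun _ => traceNorm_nonneg _]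
  refine forall₂_congr fun ε hε => ?_
  simp only [Subtype.exists, iSup_le_iff_of_nonneg hε.le, exists_prop]
  exact ⟨fun ⟨U, hU, h⟩ => ⟨fun a => U a.1 a.2, fun a => hU a.1 a.2,
      fun a b _ => h a.1 b.1 a.2 b.2⟩,
    fun ⟨U, hU, h⟩ => ⟨fun x y => U (x, y), fun x y => hU (x, y),
      fun x x' y y' => h (x, y) (x', y') ()⟩⟩

end Theta

section Integral

variable {f : S → Matrix (Fin d) (Fin d) ℂ}

theorem isHermitian_mInt (μ : Measure S) (hf : ∀ s, (f s).IsHermitian) :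
    (mInt μ f).IsHermitian := by
  ext i j
  simp only [Matrix.conjTranspose_apply, mInt, Matrix.of_apply, ← (hf _).apply i j]
  exact integral_conj.symm

theorem measurable_re_trace_mul (hfm : ∀ i j, Measurable fun s => f s i j)
    (E : Matrix (Fin d) (Fin d) ℂ) : Measurable fun s => (E * f s).trace.re := by
  simp only [Matrix.trace, Matrix.diag, Matrix.mul_apply]
  exact Complex.measurable_re.comp <| Finset.measurable_fun_sum _ fun i _ =>
    Finset.measurable_fun_sum _ fun j _ => (hfm j i).const_mul _

theorem integrable_apply_of_isDensity (hf : ∀ s, IsDensity (f s))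
    (hfm : ∀ i j, Measurable fun s => f s i j) (μ : Measure S) [IsFiniteMeasure μ] (i j : Fin d) :
    Integrable (fun s => f s i j) μ :=
  Integrable.of_bound (hfm i j).aestronglyMeasurable 1
    (ae_of_all _ fun s => norm_apply_le_one_of_isDensity (hf s) i j)

theorem re_trace_mul_mInt (hf : ∀ s, IsDensity (f s))
    (hfm : ∀ i j, Measurable fun s => f s i j) (μ : Measure S) [IsFiniteMeasure μ]
    (E : Matrix (Fin d) (Fin d) ℂ) :
    (E * mInt μ f).trace.re = ∫ s, (E * f s).trace.re ∂μ := by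
  have hint : ∀ i j, Integrable (fun s => E i j * f s j i) μ := fun i j =>
    (integrable_apply_of_isDensity hf hfm μ j i).const_mul _
  have hrow : ∀ i, Integrable (fun s => ∑ j, E i j * f s j i) μ := fun i =>
    integrable_finsetSum _ fun j _ => hint i j
  have htrace : (E * mInt μ f).trace = ∫ s, (E * f s).trace ∂μ := by
    simp only [Matrix.trace, Matrix.diag, Matrix.mul_apply, mInt, Matrix.of_apply]
    rw [integral_finsetSum _ fun i _ => hrow i]
    refine sum_congr rfl fun i _ => ?_
    rw [integral_finsetSum _ fun j _ => hint i j]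
    exact sum_congr rfl fun j _ => (integral_const_mul _ _).symm
  rw [htrace]
  exact (integral_re (integrable_finsetSum _ fun i _ => hrow i)).symm

end Integral

section Tests

variable {r : P → Q → S → Matrix (Fin d) (Fin d) ℂ}

theorem traceNorm_le_of_abs_asymmetry_le (hr : ∀ p q s, IsDensity (r p q s))
    (hrm : ∀ p q i j, Measurable fun s => r p q s i j) {U : P → Measure S}
    [∀ p, IsProbabilityMeasure (U p)] {c : ℝ} (hc : 0 ≤ c)
    (h : ∀ l, |asymmetry (fun p q s => tomographyLaw (r p q s)) U l| ≤ c)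
    (p p' : P) (q : Q) :
    traceNorm (mInt (U p') (r p q) - mInt (U p) (r p' q)) ≤ 8 * (d : ℝ) ^ 3 * c := by
  have hherm : (mInt (U p') (r p q) - mInt (U p) (r p' q)).IsHermitian :=
    (isHermitian_mInt _ fun s => (hr p q s).1.isHermitian).sub
      (isHermitian_mInt _ fun s => (hr p' q s).1.isHermitian)
  have heffect : ∀ z, ‖(tomographyEffect z *
      (mInt (U p') (r p q) - mInt (U p) (r p' q))).trace‖ ≤ c := fun z => by
    rw [← ofReal_re_trace_mul (posSemidef_tomographyEffect z).isHermitian hherm, Complex.norm_real,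
      mul_sub, Matrix.trace_sub, Complex.sub_re, re_trace_mul_mInt (hr p q) (hrm p q),
      re_trace_mul_mInt (hr p' q) (hrm p' q)]
    exact h (p, p', q, z)
  simpa only [Fintype.card_fin] using
    traceNorm_le_of_norm_trace_tomographyEffect_mul_le hc heffect

theorem nonempty_of_not_approxSymmetrizable [Nonempty S] (h : ¬ApproxSymmetrizable r) :
    Nonempty P ∧ Nonempty Q ∧ Nonempty (Fin d) := by
  contrapose! h
  intro ε hε
  obtain ⟨U, hU⟩ := nonempty_probabilityFamily (P := P) (S := S)
  refine ⟨U, hU, fun p p' q => ?_⟩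
  have := h ⟨p⟩ ⟨q⟩
  simpa [traceNorm, Matrix.trace] using hε.le

theorem exists_separates_onPairs_of_not_approxSymmetrizable [Nonempty S] [Fintype P] [Fintype Q]
    (hr : ∀ p q s, IsDensity (r p q s))
    (hrm : ∀ p q i j, Measurable fun s => r p q s i j)
    (h : ¬ApproxSymmetrizable r) :
    ∃ T : AntisymmTest P Q (Fin d × Fin d × Fin 4),
      Separates (fun (a : P × Q) s => tomographyLaw (r a.1 a.2 s)) T.onPairs := by
  obtain ⟨hP, hQ, hd⟩ := nonempty_of_not_approxSymmetrizable h
  have hdpos : 0 < d := Fin.pos_iff_nonempty.2 hd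
  simp only [ApproxSymmetrizable, not_forall, not_exists, not_and, not_le, exists_prop] at h
  obtain ⟨ε, hε, h⟩ := h
  have hc : 0 < ε / (8 * (d : ℝ) ^ 3) := by positivity
  refine exists_separates_onPairs (W := fun p q s => tomographyLaw (r p q s))
    (fun p q z => measurable_re_trace_mul (hrm p q) (tomographyEffect z))
    (fun p q s => tomographyLaw_mem_stdSimplex (hr p q s)) hc fun U hU => ?_
  by_contra! hcon
  obtain ⟨p, p', q, hlt⟩ := h U hU
  refine hlt.not_ge ((traceNorm_le_of_abs_asymmetry_le hr hrm hc.le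
    (fun l => (hcon l).le) p p' q).trans_eq ?_)
  field_simp

end Tests

end Symmetrizability

/-! ### Codes for channels that are not symmetrizable -/

section TensorFam

variable {K m : Type*} [Fintype K] [DecidableEq K] [Fintype m]

theorem tensorFam_mul (A B : K → Matrix m m ℂ) :
    tensorFam A * tensorFam B = tensorFam fun k => A k * B k := by
  ext i j
  simp only [tensorFam, Matrix.mul_apply, Matrix.of_apply, ← prod_mul_distrib]
  rw [prod_univ_sum, Fintype.piFinset_univ]

theorem posSemidef_tensorFam {K m : Type*} [Fintype K] [Finite m] {A : K → Matrix m m ℂ}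
    (hA : ∀ k, (A k).PosSemidef) : (tensorFam A).PosSemidef := by
  classical
  have := Fintype.ofFinite m
  choose C hC using fun k => exists_eq_conjTranspose_mul_self (hA k)
  have hfactor : tensorFam A = (tensorFam C)ᴴ * tensorFam C := by
    have hconj : (tensorFam C)ᴴ = tensorFam fun k => (C k)ᴴ := by
      ext i j
      simp [tensorFam]
    rw [hconj, tensorFam_mul, ← funext hC]
  exact hfactor ▸ Matrix.posSemidef_conjTranspose_mul_self _

theorem trace_tensorFam (A : K → Matrix m m ℂ) : (tensorFam A).trace = ∏ k, (A k).trace := by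
  simp only [Matrix.trace, Matrix.diag, tensorFam, Matrix.of_apply]
  rw [prod_univ_sum, Fintype.piFinset_univ]

theorem isDensity_tensorFam {A : K → Matrix m m ℂ} (hA : ∀ k, IsDensity (A k)) :
    IsDensity (tensorFam A) :=
  ⟨posSemidef_tensorFam fun k => (hA k).1, by
    rw [trace_tensorFam, prod_eq_one fun k _ => (hA k).2]⟩

theorem sum_tensorFam_eq_one {K m Z : Type*} [Fintype K] [DecidableEq K] [DecidableEq m]
    [Fintype Z] {E : Z → Matrix m m ℂ} (hE : ∑ z, E z = 1) :
    ∑ z : K → Z, tensorFam (fun k => E (z k)) = 1 := by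
  ext i j
  simp only [Matrix.sum_apply, tensorFam, Matrix.of_apply]
  rw [← Fintype.piFinset_univ, ← prod_univ_sum (fun _ => univ) fun k z => E z (i k) (j k)]
  simp only [← Matrix.sum_apply, hE, Matrix.one_apply, prod_ite_zero, mem_univ, true_imp_iff,
    prod_const_one, funext_iff]

variable {Z A : Type*} [Fintype Z] [DecidableEq A]

/-- The decoding operator of the message `a` when every system is measured with the effects `E` and
the string of outcomes is decoded by `dec`. -/
def decodingEffect {K m : Type*} [Fintype K] [DecidableEq K] (E : Z → Matrix m m ℂ)
    (dec : (K → Z) → A) (a : A) : Matrix (K → m) (K → m) ℂ :=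
  ∑ z with dec z = a, tensorFam fun k => E (z k)

variable {E : Z → Matrix m m ℂ} {dec : (K → Z) → A}

theorem posSemidef_decodingEffect {m : Type*} [Finite m] {E : Z → Matrix m m ℂ}
    (hE : ∀ z, (E z).PosSemidef) (a : A) : (decodingEffect E dec a).PosSemidef :=
  Matrix.posSemidef_sum _ fun z _ => posSemidef_tensorFam fun k => hE (z k)

theorem sum_decodingEffect {m : Type*} [DecidableEq m] [Fintype A] {E : Z → Matrix m m ℂ}
    (hE : ∑ z, E z = 1) : ∑ a, decodingEffect E dec a = 1 := by
  rw [← sum_tensorFam_eq_one (K := K) hE]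
  exact sum_fiberwise univ dec _

theorem re_trace_decodingEffect_mul (hE : ∀ z, (E z).IsHermitian) {r : K → Matrix m m ℂ}
    (hr : ∀ k, (r k).IsHermitian) (a : A) :
    (decodingEffect E dec a * tensorFam r).trace.re =
      ∑ z with dec z = a, ∏ k, (E (z k) * r k).trace.re := by
  rw [decodingEffect, sum_mul, Matrix.trace_sum, Complex.re_sum]
  refine sum_congr rfl fun z _ => ?_
  rw [tensorFam_mul, trace_tensorFam,
    ← prod_congr rfl fun k _ => ofReal_re_trace_mul (hE (z k)) (hr k), ← Complex.ofReal_prod,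
    Complex.ofReal_re]

end TensorFam

section Direct

theorem div_log_two_le_logb {n M : ℕ} {r : ℝ} (hn : 0 < n) (hM : Real.exp (n * r) ≤ M) :
    r / Real.log 2 ≤ 1 / n * Real.logb 2 M := by
  rw [Real.logb, one_div, ← mul_div_assoc]
  gcongr
  rw [le_inv_mul_iff₀ (Nat.cast_pos.2 hn)]
  exact (Real.le_log_iff_exp_le ((Real.exp_pos _).trans_le hM)).2 hM

variable {𝒳 𝒴 𝒮 : Type*} {d : ℕ} {ρ : 𝒳 → 𝒴 → 𝒮 → Matrix (Fin d) (Fin d) ℂ}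

theorem average_re_trace_decodingEffect_mul {n M : ℕ} (hρ : ∀ x y s, IsDensity (ρ x y s))
    (F : Codebook (Fin n) (Fin M) (Fin M) 𝒳 𝒴)
    (dec : (Fin n → Fin d × Fin d × Fin 4) → Fin M × Fin M) (s : Fin n → 𝒮) :
    1 / (M * M : ℝ) * ∑ i, ∑ j, (decodingEffect tomographyEffect dec (i, j) *
        tensorFam fun k => ρ ((F k).1 i) ((F k).2 j) (s k)).trace.re =
      𝔼 a, ∑ z with dec z = a,
        ∏ k, tomographyLaw (ρ (F.letter a k).1 (F.letter a k).2 (s k)) (z k) := by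
  rw [Fintype.expect_eq_sum_div_card, Fintype.card_prod, Fintype.card_fin, Nat.cast_mul,
    one_div, div_eq_inv_mul, Fintype.sum_prod_type]
  simp only [re_trace_decodingEffect_mul (fun z => (posSemidef_tomographyEffect z).isHermitian)
    fun _ => (hρ _ _ _).1.isHermitian]
  rfl

variable [Nonempty 𝒮]

theorem achievableDet_of_eventually_code [Nonempty (Fin d)] (hρ : ∀ x y s, IsDensity (ρ x y s))
    {r : ℝ} (hcode : ∀ β : ℝ, 0 < β → ∀ᶠ n : ℕ in atTop, ∃ M : ℕ, Real.exp (n * r) ≤ M ∧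
      ∃ (F : Codebook (Fin n) (Fin M) (Fin M) 𝒳 𝒴)
        (dec : (Fin n → Fin d × Fin d × Fin 4) → Fin M × Fin M), ∀ s : Fin n → 𝒮,
          1 - β < 𝔼 a, ∑ z with dec z = a,
            ∏ k, tomographyLaw (ρ (F.letter a k).1 (F.letter a k).2 (s k)) (z k))
    {R1 R2 : ℝ} (hR1 : R1 ∈ Set.Icc 0 (r / Real.log 2)) (hR2 : R2 ∈ Set.Icc 0 (r / Real.log 2)) :
    AchievableDet ρ R1 R2 := by
  refine ⟨hR1.1, hR2.1, fun β hβ δ₁ hδ₁ δ₂ hδ₂ => eventually_atTop.1 ?_⟩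
  filter_upwards [hcode (β / 2) (half_pos hβ), eventually_gt_atTop 0] with n ⟨M, hM, F, dec, hs⟩ hn
  have hrate := div_log_two_le_logb hn hM
  refine ⟨M, M, fun i k => (F k).1 i, fun j k => (F k).2 j,
    fun i j => decodingEffect tomographyEffect dec (i, j),
    fun i j => posSemidef_decodingEffect posSemidef_tomographyEffect (i, j), ?_,
    by linarith [hR1.2], by linarith [hR2.2], ?_⟩
  · rw [← Fintype.sum_prod_type, sum_decodingEffect sum_tomographyEffect]
  · refine (ciSup_le fun s => ?_).trans_lt (half_lt_self hβ)
    rw [average_re_trace_decodingEffect_mul hρ]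
    linarith [hs s]

variable [MeasurableSpace 𝒮]

theorem exists_testFamily_separates [Fintype 𝒳] [Fintype 𝒴] (hρ : ∀ x y s, IsDensity (ρ x y s))
    (hmeas : ∀ x y i j, Measurable fun s => ρ x y s i j) (h1 : ¬ApproxSymmetrizable ρ)
    (h2 : ¬ApproxSymmetrizable fun y x => ρ x y)
    (h3 : ¬ApproxSymmetrizable fun (a : 𝒳 × 𝒴) (_ : Unit) => ρ a.1 a.2) :
    ∃ T : TestFamily 𝒳 𝒴 (Fin d × Fin d × Fin 4),
      ∀ t, Separates (fun (a : 𝒳 × 𝒴) s => tomographyLaw (ρ a.1 a.2 s)) (T.kernel t) := by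
  obtain ⟨T₁, hT₁⟩ := exists_separates_onPairs_of_not_approxSymmetrizable hρ hmeas h1
  obtain ⟨T₂, hT₂⟩ := exists_separates_onPairs_of_not_approxSymmetrizable
    (r := fun y x => ρ x y) (fun y x => hρ x y) (fun y x => hmeas x y) h2
  obtain ⟨T₃, hT₃⟩ := exists_separates_onPairs_of_not_approxSymmetrizable
    (r := fun (a : 𝒳 × 𝒴) (_ : Unit) => ρ a.1 a.2)
    (fun a _ => hρ a.1 a.2) (fun a _ => hmeas a.1 a.2) h3
  refine ⟨⟨T₁, T₂, T₃⟩, fun t => ?_⟩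
  match t with
  | 0 => exact hT₁
  | 1 => exact hT₂.comp_equiv (Equiv.prodComm 𝒳 𝒴)
  | 2 => exact hT₃.comp_equiv (Equiv.prodPUnit (𝒳 × 𝒴)).symm

theorem interior_Rd_nonempty [Finite 𝒳] [Finite 𝒴] (hρ : ∀ x y s, IsDensity (ρ x y s))
    (hmeas : ∀ x y i j, Measurable fun s => ρ x y s i j) (h1 : ¬ApproxSymmetrizable ρ)
    (h2 : ¬ApproxSymmetrizable fun y x => ρ x y)
    (h3 : ¬ApproxSymmetrizable fun (a : 𝒳 × 𝒴) (_ : Unit) => ρ a.1 a.2) :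
    (interior (Rd ρ)).Nonempty := by
  have := Fintype.ofFinite 𝒳
  have := Fintype.ofFinite 𝒴
  obtain ⟨_, _, _⟩ := nonempty_of_not_approxSymmetrizable h1
  obtain ⟨T, hT⟩ := exists_testFamily_separates hρ hmeas h1 h2 h3
  obtain ⟨r, hr, hcode⟩ := exists_rate_forall_eventually_code
    (fun (a : 𝒳 × 𝒴) s => tomographyLaw_mem_stdSimplex (hρ a.1 a.2 s)) hT
  have hc : 0 < r / Real.log 2 := div_pos hr (Real.log_pos one_lt_two)
  have hsub : Set.Ioo 0 (r / Real.log 2) ×ˢ Set.Ioo 0 (r / Real.log 2) ⊆ Rd ρ := fun R hR =>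
    subset_closure (achievableDet_of_eventually_code hρ hcode
      (Set.Ioo_subset_Icc_self hR.1) (Set.Ioo_subset_Icc_self hR.2))
  exact ((Set.nonempty_Ioo.2 hc).prod (Set.nonempty_Ioo.2 hc)).mono
    (interior_maximal hsub (isOpen_Ioo.prod isOpen_Ioo))

end Direct

/-! ### Codes for symmetrizable channels -/

section Symmetrization

theorem norm_prod_sub_prod_le {K : Type*} {a b : K → ℂ} {ε : ℝ} (s : Finset K)
    (ha : ∀ k, ‖a k‖ ≤ 1) (hb : ∀ k, ‖b k‖ ≤ 1) (h : ∀ k, ‖a k - b k‖ ≤ ε) :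
    ‖∏ k ∈ s, a k - ∏ k ∈ s, b k‖ ≤ #s * ε := by
  classical
  induction s using Finset.induction_on with
  | empty => simp
  | insert x s hx ih =>
    have hprod : ‖∏ k ∈ s, b k‖ ≤ 1 := by
      rw [norm_prod]
      exact prod_le_one (fun k _ => norm_nonneg _) fun k _ => hb k
    rw [prod_insert hx, prod_insert hx, card_insert_of_notMem hx, Nat.cast_succ]
    calc ‖a x * ∏ k ∈ s, a k - b x * ∏ k ∈ s, b k‖
        = ‖a x * (∏ k ∈ s, a k - ∏ k ∈ s, b k) + (a x - b x) * ∏ k ∈ s, b k‖ := by ring_nf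
      _ ≤ ‖a x‖ * ‖∏ k ∈ s, a k - ∏ k ∈ s, b k‖ + ‖a x - b x‖ * ‖∏ k ∈ s, b k‖ :=
          (norm_add_le _ _).trans_eq (by rw [norm_mul, norm_mul])
      _ ≤ 1 * (#s * ε) + ε * 1 := by
          gcongr
          exacts [ha x, (norm_nonneg _).trans (h x), h x]
      _ = _ := by ring

theorem re_trace_mul_tensorFam_sub_le {K m : Type*} [Fintype K] [DecidableEq K] [Fintype m]
    (E : Matrix (K → m) (K → m) ℂ) {A B : K → Matrix m m ℂ} {ε : ℝ} (hA : ∀ k i j, ‖A k i j‖ ≤ 1)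
    (hB : ∀ k i j, ‖B k i j‖ ≤ 1) (h : ∀ k i j, ‖A k i j - B k i j‖ ≤ ε) :
    (E * tensorFam A).trace.re - (E * tensorFam B).trace.re ≤
      (∑ p, ∑ q, ‖E p q‖) * Fintype.card K * ε := by
  rw [← Complex.sub_re, ← Matrix.trace_sub, ← mul_sub]
  refine (Complex.re_le_norm _).trans ?_
  simp only [Matrix.trace, Matrix.diag, Matrix.mul_apply, sum_mul]
  refine norm_sum_le_of_le _ fun p _ => norm_sum_le_of_le _ fun q _ => ?_
  rw [norm_mul, mul_assoc]
  gcongr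
  exact norm_prod_sub_prod_le univ (fun k => hA k _ _) (fun k => hB k _ _) fun k => h k _ _

theorem sum_re_trace_mul_le_one {A m : Type*} [Fintype A] [Fintype m] [DecidableEq m]
    {D : A → Matrix m m ℂ} (hD : ∀ a, (D a).PosSemidef) (hsum : ∑ a, D a = 1)
    {τ : Matrix m m ℂ} (hτ : IsDensity τ) (T : Finset A) : ∑ a ∈ T, (D a * τ).trace.re ≤ 1 :=
  calc ∑ a ∈ T, (D a * τ).trace.re ≤ ∑ a, (D a * τ).trace.re :=
        sum_le_univ_sum_of_nonneg fun a => re_trace_mul_nonneg (hD a) hτ.1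
    _ = 1 := by
        rw [← Complex.re_sum, ← Matrix.trace_sum, ← sum_mul, hsum, one_mul, hτ.2, Complex.one_re]

variable {S : Type*} [MeasurableSpace S] {d : ℕ}

theorem norm_mInt_apply_le_one {f : S → Matrix (Fin d) (Fin d) ℂ} (hf : ∀ s, IsDensity (f s))
    (μ : Measure S) [IsProbabilityMeasure μ] (i j : Fin d) : ‖mInt μ f i j‖ ≤ 1 := by
  simpa [mInt] using norm_integral_le_of_norm_le_const (μ := μ)
    (ae_of_all _ fun s => norm_apply_le_one_of_isDensity (hf s) i j)

section Product

variable {K : Type*} [Fintype K] {ν : K → Measure S} [∀ k, IsProbabilityMeasure (ν k)]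
  {f : K → S → Matrix (Fin d) (Fin d) ℂ}

theorem integrable_mul_tensorFam_apply (hf : ∀ k s, IsDensity (f k s))
    (hfm : ∀ k i j, Measurable fun s => f k s i j) (c : ℂ) (p q : K → Fin d) :
    Integrable (fun s : K → S => c * tensorFam (fun k => f k (s k)) p q) (Measure.pi ν) :=
  (Integrable.fintype_prod (f := fun k s => f k s (p k) (q k)) fun k =>
    integrable_apply_of_isDensity (hf k) (hfm k) (ν k) _ _).const_mul c

variable [DecidableEq K]

theorem integrable_trace_mul_tensorFam (hf : ∀ k s, IsDensity (f k s))
    (hfm : ∀ k i j, Measurable fun s => f k s i j) (E : Matrix (K → Fin d) (K → Fin d) ℂ) :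
    Integrable (fun s : K → S => (E * tensorFam fun k => f k (s k)).trace) (Measure.pi ν) :=
  integrable_finsetSum _ fun p _ => integrable_finsetSum _ fun q _ =>
    integrable_mul_tensorFam_apply hf hfm (E p q) q p

theorem re_trace_mul_tensorFam_mInt (hf : ∀ k s, IsDensity (f k s))
    (hfm : ∀ k i j, Measurable fun s => f k s i j) (E : Matrix (K → Fin d) (K → Fin d) ℂ) :
    (E * tensorFam fun k => mInt (ν k) (f k)).trace.re =
      ∫ s : K → S, (E * tensorFam fun k => f k (s k)).trace.re ∂Measure.pi ν := by
  have hint := fun p q => integrable_mul_tensorFam_apply (ν := ν) hf hfm (E p q) q p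
  have htrace : (E * tensorFam fun k => mInt (ν k) (f k)).trace =
      ∫ s : K → S, (E * tensorFam fun k => f k (s k)).trace ∂Measure.pi ν := by
    simp only [Matrix.trace, Matrix.diag, Matrix.mul_apply]
    rw [integral_finsetSum _ fun p _ => integrable_finsetSum _ fun q _ => hint p q]
    refine sum_congr rfl fun p _ => ?_
    rw [integral_finsetSum _ fun q _ => hint p q]
    refine sum_congr rfl fun q _ => ?_
    rw [integral_const_mul]
    exact congrArg _ (integral_fintype_prod_eq_prod fun k s => f k s (q k) (p k)).symm
  rw [htrace]
  exact (integral_re (integrable_trace_mul_tensorFam hf hfm E)).symm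

end Product

section Jamming

variable {P Q I J K : Type*} [Fintype K] [DecidableEq K]

/-- The probability of the decoding operator `E` when the messages are `(i, j)` and the states are
drawn at random from the distributions `U` as if the first message were `i'`. -/
def jammedProb (r : P → Q → S → Matrix (Fin d) (Fin d) ℂ) (f : I → K → P) (g : J → K → Q)
    (U : P → Measure S) (i i' : I) (j : J) (E : Matrix (K → Fin d) (K → Fin d) ℂ) : ℝ :=
  (E * tensorFam fun k => mInt (U (f i' k)) (r (f i k) (g j k))).trace.re

variable {r : P → Q → S → Matrix (Fin d) (Fin d) ℂ} {f : I → K → P} {g : J → K → Q}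
  {U : P → Measure S} [∀ p, IsProbabilityMeasure (U p)]

theorem jammedProb_eq_integral (hr : ∀ p q s, IsDensity (r p q s))
    (hrm : ∀ p q i j, Measurable fun s => r p q s i j) (i i' : I) (j : J)
    (E : Matrix (K → Fin d) (K → Fin d) ℂ) :
    jammedProb r f g U i i' j E = ∫ s : K → S,
      (E * tensorFam fun k => r (f i k) (g j k) (s k)).trace.re ∂Measure.pi fun k => U (f i' k) :=
  re_trace_mul_tensorFam_mInt (f := fun k => r (f i k) (g j k)) (fun _ => hr _ _)
    (fun _ => hrm _ _) E

theorem integrable_re_trace_mul_tensorFam (hr : ∀ p q s, IsDensity (r p q s))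
    (hrm : ∀ p q i j, Measurable fun s => r p q s i j) (i i' : I) (j : J)
    (E : Matrix (K → Fin d) (K → Fin d) ℂ) :
    Integrable (fun s : K → S => (E * tensorFam fun k => r (f i k) (g j k) (s k)).trace.re)
      (Measure.pi fun k => U (f i' k)) :=
  (integrable_trace_mul_tensorFam (f := fun k => r (f i k) (g j k)) (fun _ => hr _ _)
    (fun _ => hrm _ _) E).re

theorem sum_jammedProb_le_one {A : Type*} [Fintype A] (hr : ∀ p q s, IsDensity (r p q s))
    (hrm : ∀ p q i j, Measurable fun s => r p q s i j)
    {D : A → Matrix (K → Fin d) (K → Fin d) ℂ} (hD : ∀ a, (D a).PosSemidef) (hsum : ∑ a, D a = 1)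
    (i i' : I) (j : J) (T : Finset A) : ∑ a ∈ T, jammedProb r f g U i i' j (D a) ≤ 1 := by
  have hint := fun a =>
    integrable_re_trace_mul_tensorFam (f := f) (g := g) (U := U) hr hrm i i' j (D a)
  simp only [jammedProb_eq_integral hr hrm]
  rw [← integral_finsetSum _ fun a _ => hint a]
  calc _ ≤ ∫ _ : K → S, (1 : ℝ) ∂Measure.pi fun k => U (f i' k) :=
        integral_mono (integrable_finsetSum _ fun a _ => hint a) (integrable_const _) fun s =>
          sum_re_trace_mul_le_one hD hsum (isDensity_tensorFam fun k => hr _ _ _) T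
    _ = 1 := by simp

theorem le_sum_jammedProb [Fintype I] [Fintype J] (hr : ∀ p q s, IsDensity (r p q s))
    (hrm : ∀ p q i j, Measurable fun s => r p q s i j)
    {D : I × J → Matrix (K → Fin d) (K → Fin d) ℂ} {c : ℝ}
    (hc : ∀ s : K → S, c ≤
      ∑ a, (D a * tensorFam fun k => r (f a.1 k) (g a.2 k) (s k)).trace.re) (i' : I) :
    c ≤ ∑ a : I × J, jammedProb r f g U a.1 i' a.2 (D a) := by
  have hint := fun a : I × J =>
    integrable_re_trace_mul_tensorFam (f := f) (g := g) (U := U) hr hrm a.1 i' a.2 (D a)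
  simp only [jammedProb_eq_integral hr hrm]
  rw [← integral_finsetSum _ fun a _ => hint a]
  calc c = ∫ _ : K → S, c ∂Measure.pi fun k => U (f i' k) := by simp
    _ ≤ _ := integral_mono (integrable_const _) (integrable_finsetSum _ fun a _ => hint a) hc

theorem jammedProb_sub_swap_le (hr : ∀ p q s, IsDensity (r p q s)) {ε : ℝ}
    (hU : ∀ p p' q, traceNorm (mInt (U p') (r p q) - mInt (U p) (r p' q)) ≤ ε) (i i' : I) (j : J)
    (E : Matrix (K → Fin d) (K → Fin d) ℂ) :
    jammedProb r f g U i i' j E - jammedProb r f g U i' i j E ≤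
      (∑ p, ∑ q, ‖E p q‖) * Fintype.card K * ε :=
  re_trace_mul_tensorFam_sub_le E (fun _ => norm_mInt_apply_le_one (hr _ _) _)
    (fun _ => norm_mInt_apply_le_one (hr _ _) _) fun k p q =>
      (norm_apply_le_traceNorm (mInt _ _ - mInt _ _) p q).trans (hU (f i k) (f i' k) (g j k))

end Jamming

/-- If the outputs for `(i, j)` jammed as `i'` and for `(i', j)` jammed as `i` cannot be told apart,
the success probabilities of the two add up to about `1`. -/
theorem subsingleton_of_almost_symm {I J : Type*} [Fintype I] [Fintype J] [Nonempty J]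
    {G : I → I → J → I × J → ℝ} (hG : ∀ i i' j (T : Finset (I × J)), ∑ b ∈ T, G i i' j b ≤ 1)
    (hsymm : ∀ i i' j b, G i i' j b - G i' i j b ≤ 1 / 8)
    (hsucc : ∀ i', 7 / 8 * (Fintype.card (I × J) : ℝ) ≤ ∑ a : I × J, G a.1 i' a.2 a) :
    Subsingleton I := by
  classical
  have hpair : ∀ i i' j, G i i' j (i, j) + G i' i j (i', j) ≤
      9 / 8 + if i = i' then 7 / 8 else 0 := fun i i' j => by
    split_ifs with h
    · subst h
      have := hG i i j {(i, j)}
      rw [sum_singleton] at this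
      linarith
    · have := hG i i' j {(i, j), (i', j)}
      rw [sum_pair (by simp [h])] at this
      linarith [hsymm i' i j (i', j)]
  have hswap : ∑ i', ∑ i, ∑ j, G i' i j (i', j) = ∑ i', ∑ i, ∑ j, G i i' j (i, j) := sum_comm
  have hupper := sum_le_sum fun i' (_ : i' ∈ univ) => sum_le_sum fun i (_ : i ∈ univ) =>
    sum_le_sum fun j (_ : j ∈ univ) => hpair i i' j
  have hlower := sum_le_sum fun i' (_ : i' ∈ univ) => hsucc i'
  simp only [sum_add_distrib, hswap, sum_const, card_univ, nsmul_eq_mul, mul_ite, mul_zero,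
    sum_ite_eq', mem_univ, if_true, Fintype.sum_prod_type, Fintype.card_prod, Nat.cast_mul]
    at hupper hlower
  have hJ : (0 : ℝ) < Fintype.card J := Nat.cast_pos.2 Fintype.card_pos
  rw [← Fintype.card_le_one_iff_subsingleton]
  by_contra! hI
  have hI' : (2 : ℝ) ≤ Fintype.card I := by exact_mod_cast hI
  have hIJ : 0 < (Fintype.card I : ℝ) * Fintype.card J := by positivity
  nlinarith

theorem ApproxSymmetrizable.subsingleton_of_code {P Q I J K : Type*} [Fintype K] [DecidableEq K]
    [Fintype I] [Fintype J] [Nonempty J] {r : P → Q → S → Matrix (Fin d) (Fin d) ℂ}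
    (hsymm : ApproxSymmetrizable r) (hr : ∀ p q s, IsDensity (r p q s))
    (hrm : ∀ p q i j, Measurable fun s => r p q s i j) {f : I → K → P} {g : J → K → Q}
    {D : I × J → Matrix (K → Fin d) (K → Fin d) ℂ} (hD : ∀ a, (D a).PosSemidef)
    (hsum : ∑ a, D a = 1) (hsucc : ∀ s : K → S, 7 / 8 * (Fintype.card (I × J) : ℝ) ≤
      ∑ a, (D a * tensorFam fun k => r (f a.1 k) (g a.2 k) (s k)).trace.re) :
    Subsingleton I := by
  obtain ⟨C, hC⟩ :=
    (Set.finite_range fun a => (∑ p, ∑ q, ‖D a p q‖) * (Fintype.card K : ℝ)).bddAbove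
  obtain ⟨U, hU, hUε⟩ := hsymm (1 / (8 * (|C| + 1))) (by positivity)
  refine subsingleton_of_almost_symm (G := fun i i' j b => jammedProb r f g U i i' j (D b))
    (fun i i' j => sum_jammedProb_le_one hr hrm hD hsum i i' j)
    (fun i i' j b => (jammedProb_sub_swap_le hr hUε i i' j (D b)).trans ?_)
    (le_sum_jammedProb hr hrm hsucc)
  calc (∑ p, ∑ q, ‖D b p q‖) * (Fintype.card K : ℝ) * (1 / (8 * (|C| + 1)))
      ≤ (|C| + 1) * (1 / (8 * (|C| + 1))) := by
        gcongr
        linarith [hC (Set.mem_range_self b), le_abs_self C]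
    _ = 1 / 8 := by field_simp

end Symmetrization

section Converse

theorem lt_of_iSup_one_sub_lt {ι : Type*} {p : ι → ℝ} {β : ℝ} (hp : ∀ i, 0 ≤ p i)
    (h : ⨆ i, (1 - p i) < β) (i : ι) : 1 - β < p i := by
  have hbdd : BddAbove (Set.range fun i => 1 - p i) :=
    ⟨1, Set.forall_mem_range.2 fun i => sub_le_self 1 (hp i)⟩
  linarith [le_ciSup hbdd i]

theorem nontrivial_fin_of_pos_logb {n M : ℕ} (h : 0 < 1 / (n : ℝ) * Real.logb 2 M) :
    Nontrivial (Fin M) := by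
  rw [Fin.nontrivial_iff_two_le]
  by_contra! hM
  interval_cases M <;> simp at h

variable {𝒳 𝒴 𝒮 : Type*} {d : ℕ} {ρ : 𝒳 → 𝒴 → 𝒮 → Matrix (Fin d) (Fin d) ℂ}

theorem interior_Rd_eq_empty_of_fst (h : ∀ R1 R2, AchievableDet ρ R1 R2 → R1 = 0) :
    interior (Rd ρ) = ∅ := by
  have hsub : Rd ρ ⊆ {(0 : ℝ)} ×ˢ Set.univ :=
    closure_minimal (fun R hR => ⟨h R.1 R.2 hR, trivial⟩) (isClosed_singleton.prod isClosed_univ)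
  simpa [interior_prod_eq] using interior_mono hsub

theorem interior_Rd_eq_empty_of_snd (h : ∀ R1 R2, AchievableDet ρ R1 R2 → R2 = 0) :
    interior (Rd ρ) = ∅ := by
  have hsub : Rd ρ ⊆ Set.univ ×ˢ {(0 : ℝ)} :=
    closure_minimal (fun R hR => ⟨trivial, h R.1 R.2 hR⟩) (isClosed_univ.prod isClosed_singleton)
  simpa [interior_prod_eq] using interior_mono hsub

variable [Nonempty 𝒮] {R1 R2 : ℝ}

theorem exists_code_of_achievableDet (hρ : ∀ x y s, IsDensity (ρ x y s))
    (h : AchievableDet ρ R1 R2) :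
    ∃ (n M₁ M₂ : ℕ) (f₁ : Fin M₁ → Fin n → 𝒳) (f₂ : Fin M₂ → Fin n → 𝒴)
      (D : Fin M₁ × Fin M₂ → Matrix (Fin n → Fin d) (Fin n → Fin d) ℂ),
      (∀ a, (D a).PosSemidef) ∧ ∑ a, D a = 1 ∧ Nonempty (Fin M₁ × Fin M₂) ∧
      (0 < R1 → Nontrivial (Fin M₁)) ∧ (0 < R2 → Nontrivial (Fin M₂)) ∧
      ∀ s : Fin n → 𝒮, 7 / 8 * (Fintype.card (Fin M₁ × Fin M₂) : ℝ) ≤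
        ∑ a, (D a * tensorFam fun k => ρ (f₁ a.1 k) (f₂ a.2 k) (s k)).trace.re := by
  have hδ : ∀ R : ℝ, ∃ δ : ℝ, 0 < δ ∧ (0 < R → δ ≤ R) := fun R =>
    (le_or_gt R 0).elim (fun hR => ⟨1, one_pos, fun hR' => (hR.not_gt hR').elim⟩)
      fun hR => ⟨R, hR, fun _ => le_rfl⟩
  obtain ⟨δ₁, hδ₁, hR1⟩ := hδ R1
  obtain ⟨δ₂, hδ₂, hR2⟩ := hδ R2
  obtain ⟨n, hn⟩ := h.2.2 (1 / 8) (by norm_num) δ₁ hδ₁ δ₂ hδ₂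
  obtain ⟨M₁, M₂, f₁, f₂, D, hD, hsum, hrate₁, hrate₂, herr⟩ := hn n le_rfl
  simp only [← Fintype.sum_prod_type'] at hsum herr
  have hsucc := fun s => lt_of_iSup_one_sub_lt (fun s => mul_nonneg (by positivity) <|
    sum_nonneg fun a _ => re_trace_mul_nonneg (hD a.1 a.2) <|
      posSemidef_tensorFam fun k => (hρ _ _ (s k)).1) herr s
  have hM : Nonempty (Fin M₁ × Fin M₂) := by
    by_contra hM
    rw [not_nonempty_iff] at hM
    have := hsucc fun _ => Classical.arbitrary 𝒮
    norm_num at this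
  refine ⟨n, M₁, M₂, f₁, f₂, fun a => D a.1 a.2, fun a => hD _ _, hsum, hM,
    fun hR => nontrivial_fin_of_pos_logb ((sub_nonneg.2 (hR1 hR)).trans_lt hrate₁),
    fun hR => nontrivial_fin_of_pos_logb ((sub_nonneg.2 (hR2 hR)).trans_lt hrate₂), fun s => ?_⟩
  have hcard : (0 : ℝ) < Fintype.card (Fin M₁ × Fin M₂) := Nat.cast_pos.2 Fintype.card_pos
  have hlt := hsucc s
  rw [Fintype.card_prod, Fintype.card_fin, Fintype.card_fin, Nat.cast_mul] at hcard ⊢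
  rw [one_div (_ * _), lt_inv_mul_iff₀ hcard] at hlt
  exact hlt.le.trans' (by ring_nf; rfl)

variable [MeasurableSpace 𝒮]

theorem rate_fst_eq_zero (hρ : ∀ x y s, IsDensity (ρ x y s))
    (hmeas : ∀ x y i j, Measurable fun s => ρ x y s i j) (h : ApproxSymmetrizable ρ)
    (hR : AchievableDet ρ R1 R2) : R1 = 0 := by
  obtain ⟨n, M₁, M₂, f₁, f₂, D, hD, hsum, ⟨_, j⟩, hM₁, -, hsucc⟩ :=
    exists_code_of_achievableDet hρ hR
  have : Nonempty (Fin M₂) := ⟨j⟩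
  by_contra h0
  have := h.subsingleton_of_code hρ hmeas hD hsum hsucc
  exact not_nontrivial _ (hM₁ (hR.1.lt_of_ne' h0))

theorem rate_snd_eq_zero (hρ : ∀ x y s, IsDensity (ρ x y s))
    (hmeas : ∀ x y i j, Measurable fun s => ρ x y s i j)
    (h : ApproxSymmetrizable fun y x => ρ x y) (hR : AchievableDet ρ R1 R2) : R2 = 0 := by
  obtain ⟨n, M₁, M₂, f₁, f₂, D, hD, hsum, ⟨i, _⟩, -, hM₂, hsucc⟩ :=
    exists_code_of_achievableDet hρ hR
  have : Nonempty (Fin M₁) := ⟨i⟩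
  by_contra h0
  have := h.subsingleton_of_code (f := f₂) (g := f₁) (D := fun a => D a.swap)
    (fun y x => hρ x y) (fun y x => hmeas x y) (fun a => hD a.swap)
    (((Equiv.prodComm _ _).sum_comp D).trans hsum) fun s => by
      rw [Fintype.card_congr (Equiv.prodComm _ _)]
      exact (hsucc s).trans_eq ((Equiv.prodComm (Fin M₂) (Fin M₁)).sum_comp _).symm
  exact not_nontrivial _ (hM₂ (hR.2.1.lt_of_ne' h0))

theorem rate_fst_eq_zero_of_both (hρ : ∀ x y s, IsDensity (ρ x y s))
    (hmeas : ∀ x y i j, Measurable fun s => ρ x y s i j)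
    (h : ApproxSymmetrizable fun (a : 𝒳 × 𝒴) (_ : Unit) => ρ a.1 a.2)
    (hR : AchievableDet ρ R1 R2) : R1 = 0 := by
  obtain ⟨n, M₁, M₂, f₁, f₂, D, hD, hsum, ⟨_, j⟩, hM₁, -, hsucc⟩ :=
    exists_code_of_achievableDet hρ hR
  have : Nonempty (Fin M₂) := ⟨j⟩
  by_contra h0
  have := hM₁ (hR.1.lt_of_ne' h0)
  have := h.subsingleton_of_code (f := fun (a : Fin M₁ × Fin M₂) k => (f₁ a.1 k, f₂ a.2 k))
    (g := fun (_ : Unit) _ => ()) (D := fun a => D a.1)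
    (fun a _ => hρ a.1 a.2) (fun a _ => hmeas a.1 a.2) (fun a => hD a.1)
    (((Equiv.prodPUnit _).sum_comp D).trans hsum) fun s => by
      rw [Fintype.card_congr (Equiv.prodPUnit _)]
      exact (hsucc s).trans_eq ((Equiv.prodPUnit (Fin M₁ × Fin M₂)).sum_comp _).symm
  exact not_nontrivial (Fin M₁ × Fin M₂) inferInstance

end Converse

end AVMAC

theorem statement10_general {𝒳 𝒴 𝒮 : Type*} [Finite 𝒳] [Finite 𝒴] [Nonempty 𝒮]
    [MeasurableSpace 𝒮] {d : ℕ} (ρ : 𝒳 → 𝒴 → 𝒮 → Matrix (Fin d) (Fin d) ℂ)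
    (hρ : ∀ x y s, IsDensity (ρ x y s))
    (hmeas : ∀ x y i j, Measurable fun s => ρ x y s i j) :
    interior (Rd ρ) = ∅ ↔ theta1 ρ = 0 ∨ theta2 ρ = 0 ∨ theta3 ρ = 0 := by
  rw [AVMAC.theta1_eq_zero_iff, AVMAC.theta2_eq_zero_iff, AVMAC.theta3_eq_zero_iff]
  constructor
  · contrapose!
    rintro ⟨h1, h2, h3⟩
    exact AVMAC.interior_Rd_nonempty hρ hmeas h1 h2 h3
  · rintro (h1 | h2 | h3)
    · exact AVMAC.interior_Rd_eq_empty_of_fst fun _ _ => AVMAC.rate_fst_eq_zero hρ hmeas h1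
    · exact AVMAC.interior_Rd_eq_empty_of_snd fun _ _ => AVMAC.rate_snd_eq_zero hρ hmeas h2
    · exact AVMAC.interior_Rd_eq_empty_of_fst fun _ _ => AVMAC.rate_fst_eq_zero_of_both hρ hmeas h3

/-- For a measurable family satisfying Assumption A, the interior of the
deterministic code capacity region is empty iff the channel is symmetrizable, i.e. iff
`θ₁ = 0` or `θ₂ = 0` or `θ₃ = 0`. -/
theorem statement10 {𝒳 𝒴 𝒮 : Type*} [Fintype 𝒳] [DecidableEq 𝒳] [Fintype 𝒴] [DecidableEq 𝒴]
    [Nonempty 𝒮] [MeasurableSpace 𝒮] {d : ℕ}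
    (ρ : 𝒳 → 𝒴 → 𝒮 → Matrix (Fin d) (Fin d) ℂ)
    (hρ : ∀ x y s, IsDensity (ρ x y s))
    (hmeas : ∀ x y i j, Measurable fun s => ρ x y s i j)
    (hAss : AssumptionA2 ρ) :
    interior (Rd ρ) = ∅ ↔ theta1 ρ = 0 ∨ theta2 ρ = 0 ∨ theta3 ρ = 0 :=
  statement10_general ρ hρ hmeas
end
end

section
/- Suppose there exist finitely supported probability distributions U₃(·|x,y) on 𝒮, one for each (x,y)∈𝒳×𝒴, and θ≥0 such that ‖Σ_s U₃(s|x',y')ρ_{x,y,s} − Σ_s U₃(s|x,y)ρ_{x',y',s}‖₁ ≤ θ for all x,x'∈𝒳 and y,y'∈𝒴 (trace norm). Then every (n,M₁,M₂) deterministic code with M₁·M₂ ≥ 2 satisfies sup_{s^n∈𝒮^n} ē(C,s^n) ≥ (1−nθ)/4. -/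
open scoped ComplexOrder Matrix

noncomputable section

/-!
The jammer imitates a codeword: it picks a message `i` uniformly at random and draws the channel
states from `U` along the codeword of `i`. When `j` is sent, the receiver sees a product state
`σ j i`. Swapping one tensor factor at a time, approximate symmetrizability shows that no effect
`0 ≤ E ≤ 1` distinguishes `σ j i` from `σ i j` by more than `n θ`, so for `i ≠ j` the decoder cannot
tell which of the two messages was sent and which was imitated, and its errors on the two states add
up to at least `1 - n θ`. Averaging over all pairs gives an average error of at least
`(1 - 1 / M) (1 - n θ) / 2` against the jammer's mixture, hence against some fixed state sequence.
-/

open scoped MatrixOrder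

lemma le_cfcAbs {A : Type*} [NonUnitalRing A] [StarRing A] [TopologicalSpace A]
    [IsTopologicalRing A] [Module ℝ A] [SMulCommClass ℝ A A] [IsScalarTower ℝ A A]
    [NonUnitalContinuousFunctionalCalculus ℝ A IsSelfAdjoint] [PartialOrder A]
    [StarOrderedRing A] [NonnegSpectrumClass ℝ A] [T2Space A] {a : A} (ha : IsSelfAdjoint a) :
    a ≤ CFC.abs a := by
  rw [← sub_nonneg, CFC.abs_sub_self a ha]
  exact nsmul_nonneg (CFC.negPart_nonneg a) 2

section TraceNorm

variable {m : Type*} [Fintype m] [DecidableEq m]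

lemma matFun_eq_cfc {A : Matrix m m ℂ} (hA : A.IsHermitian) (f : ℝ → ℝ) :
    matFun f A = cfc f A := by
  rw [matFun, dif_pos hA, hA.cfc_eq, Matrix.IsHermitian.cfc, Unitary.conjStarAlgAut_apply]
  rfl

lemma traceNorm_eq_re_trace_abs (A : Matrix m m ℂ) :
    traceNorm A = (CFC.abs A).trace.re := by
  rw [traceNorm, matFun_eq_cfc (Matrix.isHermitian_conjTranspose_mul_self A), CFC.abs,
    CFC.sqrt_eq_real_sqrt _ (star_mul_self_nonneg A), cfcₙ_eq_cfc, Matrix.star_eq_conjTranspose]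

end TraceNorm

section TraceOrder

variable {m : Type*} [Fintype m] {A B E : Matrix m m ℂ}

lemma re_trace_mul_nonneg (hA : 0 ≤ A) (hB : 0 ≤ B) : 0 ≤ (A * B).trace.re := by
  classical
  obtain ⟨C, rfl⟩ := CStarAlgebra.nonneg_iff_eq_star_mul_self.mp hA
  rw [Matrix.mul_assoc, Matrix.trace_mul_comm]
  have hconj := (Matrix.nonneg_iff_posSemidef.mp hB).mul_mul_conjTranspose_same C
  exact (Complex.le_def.mp hconj.trace_nonneg).1

lemma re_trace_mul_le_re_trace_mul (hE : 0 ≤ E) (hAB : A ≤ B) :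
    (E * A).trace.re ≤ (E * B).trace.re := by
  have := re_trace_mul_nonneg hE (sub_nonneg.mpr hAB)
  rwa [mul_sub, Matrix.trace_sub, Complex.sub_re, sub_nonneg] at this

lemma re_trace_mul_le_re_trace [DecidableEq m] (hE : E ≤ 1) (hA : 0 ≤ A) :
    (E * A).trace.re ≤ A.trace.re := by
  have := re_trace_mul_nonneg (sub_nonneg.mpr hE) hA
  rwa [sub_mul, one_mul, Matrix.trace_sub, Complex.sub_re, sub_nonneg] at this

end TraceOrder

section TensorFam

variable {k d : Type*} [Fintype k]

/-- `tensorFam` as a real-multilinear map, so that products of mixtures expand by multilinearity. -/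
def tensorFamMultilinear :
    MultilinearMap ℝ (fun _ : k => Matrix d d ℂ) (Matrix (k → d) (k → d) ℂ) :=
  MultilinearMap.pi fun i => MultilinearMap.pi fun j =>
    (MultilinearMap.mkPiAlgebra ℝ k ℂ).compLinearMap fun a =>
      Matrix.entryLinearMap ℝ ℂ (i a) (j a)

lemma tensorFamMultilinear_apply (A : k → Matrix d d ℂ) :
    tensorFamMultilinear A = tensorFam A :=
  rfl

lemma conjTranspose_tensorFam (A : k → Matrix d d ℂ) :
    (tensorFam A)ᴴ = tensorFam fun a => (A a)ᴴ := by
  ext i j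
  simp [tensorFam, Matrix.conjTranspose_apply]

lemma tensorFam_mul_tensorFam [DecidableEq k] [Fintype d] (A B : k → Matrix d d ℂ) :
    tensorFam A * tensorFam B = tensorFam fun a => A a * B a := by
  ext i j
  simp only [tensorFam, Matrix.mul_apply, Matrix.of_apply, ← Finset.prod_mul_distrib,
    Finset.prod_univ_sum, Fintype.piFinset_univ]

lemma tensorFam_nonneg [Finite d] {A : k → Matrix d d ℂ} (hA : ∀ a, 0 ≤ A a) :
    0 ≤ tensorFam A := by
  classical
  have := Fintype.ofFinite d
  choose B hB using fun a => CStarAlgebra.nonneg_iff_eq_star_mul_self.mp (hA a)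
  have hfactor : tensorFam A = (tensorFam B)ᴴ * tensorFam B := by
    rw [conjTranspose_tensorFam, tensorFam_mul_tensorFam]
    exact congrArg tensorFam (funext hB)
  exact hfactor ▸ (Matrix.posSemidef_conjTranspose_mul_self _).nonneg

variable [DecidableEq k]

lemma tensorFam_update_sub (τ : k → Matrix d d ℂ) (a : k) (X Y : Matrix d d ℂ) :
    tensorFam (Function.update τ a (X - Y)) =
      tensorFam (Function.update τ a X) - tensorFam (Function.update τ a Y) :=
  tensorFamMultilinear.map_update_sub τ a X Y

lemma tensorFam_update_nonneg [Finite d] {τ : k → Matrix d d ℂ} {a : k}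
    (hτ : ∀ b ≠ a, 0 ≤ τ b) {P : Matrix d d ℂ} (hP : 0 ≤ P) :
    0 ≤ tensorFam (Function.update τ a P) := by
  refine tensorFam_nonneg fun b => ?_
  obtain rfl | hb := eq_or_ne b a
  · simpa using hP
  · simpa [hb] using hτ b hb

variable [Fintype d]

lemma trace_tensorFam (A : k → Matrix d d ℂ) : (tensorFam A).trace = ∏ a, (A a).trace := by
  simp only [tensorFam, Matrix.trace, Matrix.diag, Matrix.of_apply, Finset.prod_univ_sum,
    Fintype.piFinset_univ]

lemma isDensity_tensorFam {τ : k → Matrix d d ℂ} (hτ : ∀ a, IsDensity (τ a)) :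
    IsDensity (tensorFam τ) :=
  ⟨Matrix.nonneg_iff_posSemidef.mp (tensorFam_nonneg fun a => (hτ a).1.nonneg),
    (trace_tensorFam τ).trans (Finset.prod_eq_one fun a _ => (hτ a).2)⟩

lemma trace_tensorFam_update {τ : k → Matrix d d ℂ} {a : k} (hτ : ∀ b ≠ a, (τ b).trace = 1)
    (P : Matrix d d ℂ) : (tensorFam (Function.update τ a P)).trace = P.trace := by
  rw [trace_tensorFam, Fintype.prod_eq_single a fun b hb => by simpa [hb] using hτ b hb,
    Function.update_self]

variable [DecidableEq d] {E : Matrix (k → d) (k → d) ℂ}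

lemma re_trace_mul_tensorFam_update_le (hE : 0 ≤ E) (hE1 : E ≤ 1) {τ : k → Matrix d d ℂ} {a : k}
    (hτ : ∀ b ≠ a, IsDensity (τ b)) {A : Matrix d d ℂ} (hA : A.IsHermitian) :
    (E * tensorFam (Function.update τ a A)).trace.re ≤ traceNorm A := by
  have hτ0 : ∀ b ≠ a, 0 ≤ τ b := fun b hb => (hτ b hb).1.nonneg
  have hle : tensorFam (Function.update τ a A) ≤ tensorFam (Function.update τ a (CFC.abs A)) := by
    rw [← sub_nonneg, ← tensorFam_update_sub]
    exact tensorFam_update_nonneg hτ0 (sub_nonneg.mpr (le_cfcAbs hA.isSelfAdjoint))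
  calc (E * tensorFam (Function.update τ a A)).trace.re
      ≤ (E * tensorFam (Function.update τ a (CFC.abs A))).trace.re :=
        re_trace_mul_le_re_trace_mul hE hle
    _ ≤ (tensorFam (Function.update τ a (CFC.abs A))).trace.re :=
        re_trace_mul_le_re_trace hE1 (tensorFam_update_nonneg hτ0 (CFC.abs_nonneg A))
    _ = traceNorm A := by
        rw [trace_tensorFam_update fun b hb => (hτ b hb).2, traceNorm_eq_re_trace_abs]

lemma re_trace_mul_tensorFam_le_add_sum_traceNorm (hE : 0 ≤ E) (hE1 : E ≤ 1)
    {X Y : k → Matrix d d ℂ} (hX : ∀ a, IsDensity (X a)) (hY : ∀ a, IsDensity (Y a)) :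
    (E * tensorFam X).trace.re ≤ (E * tensorFam Y).trace.re + ∑ a, traceNorm (X a - Y a) := by
  suffices hybrid : ∀ s : Finset k, (E * tensorFam (s.piecewise X Y)).trace.re ≤
      (E * tensorFam Y).trace.re + ∑ a ∈ s, traceNorm (X a - Y a) by
    simpa using hybrid Finset.univ
  intro s
  induction s using Finset.induction_on with
  | empty => simp
  | insert a s ha ih =>
    have hτ : ∀ b ≠ a, IsDensity (s.piecewise X Y b) := fun b _ => by
      by_cases hb : b ∈ s <;> simp [hb, hX, hY]
    have hself : Function.update (s.piecewise X Y) a (Y a) = s.piecewise X Y := by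
      simp [ha]
    have hswap := re_trace_mul_tensorFam_update_le hE hE1 hτ ((hX a).1.1.sub (hY a).1.1)
    rw [tensorFam_update_sub, hself, mul_sub, Matrix.trace_sub, Complex.sub_re] at hswap
    rw [Finset.piecewise_insert, Finset.sum_insert ha]
    linarith

end TensorFam

section Mixture

variable {S k d : Type*}

/-- The convex combination of the matrices `R s` with weights `u s`: the channel output when the
state `s` is drawn from the finitely supported distribution `u`. -/
def mixture (u : S →₀ ℝ) (R : S → Matrix d d ℂ) : Matrix d d ℂ :=
  u.sum fun s w => w • R s

lemma isDensity_mixture [Fintype d] {u : S →₀ ℝ} (hu0 : ∀ s, 0 ≤ u s)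
    (hu1 : (u.sum fun _ w => w) = 1) {R : S → Matrix d d ℂ} (hR : ∀ s, IsDensity (R s)) :
    IsDensity (mixture u R) := by
  refine ⟨Matrix.posSemidef_sum _ fun s _ => (hR s).1.smul (hu0 s), ?_⟩
  calc (mixture u R).trace = ∑ s ∈ u.support, ((u s : ℝ) : ℂ) := by
        simp [mixture, Finsupp.sum, Matrix.trace_sum, Matrix.trace_smul, (hR _).2]
    _ = 1 := by rw [← Complex.ofReal_sum, ← Complex.ofReal_one, ← hu1, Finsupp.sum]

lemma tensorFam_mixture [Fintype k] [DecidableEq k] (u : k → S →₀ ℝ)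
    (R : k → S → Matrix d d ℂ) :
    tensorFam (fun a => mixture (u a) (R a)) =
      ∑ p ∈ Fintype.piFinset fun a => (u a).support,
        (∏ a, u a (p a)) • tensorFam fun a => R a (p a) := by
  simp only [← tensorFamMultilinear_apply, ← MultilinearMap.map_smul_univ]
  exact tensorFamMultilinear.map_sum_finset _ _

end Mixture

section POVM

variable {J m : Type*} [Fintype J] [DecidableEq m]

/-- A positive operator-valued measure with outcomes in `J`, here the decoder of a code with
message set `J`. -/
structure IsPOVM (D : J → Matrix m m ℂ) : Prop where
  posSemidef : ∀ j, (D j).PosSemidef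
  sum_eq_one : ∑ j, D j = 1

namespace IsPOVM

variable {D : J → Matrix m m ℂ} {σ : Matrix m m ℂ}

lemma nonneg (hD : IsPOVM D) (j : J) : 0 ≤ D j :=
  (hD.posSemidef j).nonneg

lemma sum_le_one [Finite m] (hD : IsPOVM D) (s : Finset J) : ∑ j ∈ s, D j ≤ 1 := by
  have := Fintype.ofFinite m
  rw [← hD.sum_eq_one]
  exact Finset.sum_le_sum_of_subset_of_nonneg (Finset.subset_univ s) fun j _ _ => hD.nonneg j

lemma le_one [Finite m] (hD : IsPOVM D) (j : J) : D j ≤ 1 := by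
  simpa using hD.sum_le_one {j}

variable [Fintype m]

lemma re_trace_mul_le_one (hD : IsPOVM D) (hσ : IsDensity σ) (j : J) :
    (D j * σ).trace.re ≤ 1 := by
  simpa [hσ.2] using re_trace_mul_le_re_trace (hD.le_one j) hσ.1.nonneg

lemma re_trace_mul_add_re_trace_mul_le_one (hD : IsPOVM D) (hσ : IsDensity σ) {i j : J}
    (hij : i ≠ j) : (D i * σ).trace.re + (D j * σ).trace.re ≤ 1 := by
  classical
  have := re_trace_mul_le_re_trace (hD.sum_le_one {i, j}) hσ.1.nonneg
  rwa [Finset.sum_pair hij, add_mul, Matrix.trace_add, Complex.add_re, hσ.2,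
    Complex.one_re] at this

end IsPOVM

end POVM

section AvgError

variable {J m : Type*} [Fintype J] [Fintype m]

/-- The average error of the decoder `D` when the message `j`, chosen uniformly at random, is
received as the state `σ j` (with junk value `1` when there are no messages). -/
def avgError (D σ : J → Matrix m m ℂ) : ℝ :=
  1 - (Fintype.card J : ℝ)⁻¹ * ∑ j, (D j * σ j).trace.re

lemma card_mul_avgError [Nonempty J] (D σ : J → Matrix m m ℂ) :
    Fintype.card J * avgError D σ = ∑ j, (1 - (D j * σ j).trace.re) := by
  simp [avgError, mul_sub]

lemma avgError_sum_smul {P : Type*} (D : J → Matrix m m ℂ) (s : Finset P) {w : P → ℝ}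
    (hw : ∑ p ∈ s, w p = 1) (σ : P → J → Matrix m m ℂ) :
    avgError D (fun j => ∑ p ∈ s, w p • σ p j) = ∑ p ∈ s, w p * avgError D (σ p) := by
  have hlin : ∀ j, (D j * ∑ p ∈ s, w p • σ p j).trace.re =
      ∑ p ∈ s, w p * (D j * σ p j).trace.re := fun j => by
    simp [Matrix.mul_sum, Matrix.trace_sum, Matrix.trace_smul]
  simp only [avgError, hlin, mul_sub, mul_one, Finset.sum_sub_distrib, hw]
  rw [Finset.sum_comm, Finset.mul_sum]
  simp only [← Finset.mul_sum, mul_left_comm]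

variable {D σ : J → Matrix m m ℂ}

lemma avgError_le_one (hD : ∀ j, 0 ≤ D j) (hσ : ∀ j, 0 ≤ σ j) : avgError D σ ≤ 1 :=
  sub_le_self _ <| mul_nonneg (by positivity) <|
    Finset.sum_nonneg fun j _ => re_trace_mul_nonneg (hD j) (hσ j)


lemma avgError_nonneg [DecidableEq m] (hD : IsPOVM D) (hσ : ∀ j, IsDensity (σ j)) :
    0 ≤ avgError D σ := by
  have hsum : ∑ j, (D j * σ j).trace.re ≤ Fintype.card J := by
    simpa using Finset.sum_le_sum fun j (_ : j ∈ Finset.univ) => hD.re_trace_mul_le_one (hσ j) j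
  rw [avgError, sub_nonneg, inv_mul_eq_div]
  exact div_le_one_of_le₀ hsum (Nat.cast_nonneg _)

lemma avgError_tensorFam_mixture_le {k d S : Type*} [Fintype k] [DecidableEq k] [Fintype d]
    (D : J → Matrix (k → d) (k → d) ℂ) (R : J → k → S → Matrix d d ℂ) {u : k → S →₀ ℝ}
    (hu0 : ∀ a s, 0 ≤ u a s) (hu1 : ∀ a, ((u a).sum fun _ w => w) = 1) {C : ℝ}
    (hC : ∀ s : k → S, avgError D (fun j => tensorFam fun a => R j a (s a)) ≤ C) :
    avgError D (fun j => tensorFam fun a => mixture (u a) (R j a)) ≤ C := by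
  have hw : ∑ p ∈ Fintype.piFinset fun a => (u a).support, ∏ a, u a (p a) = 1 := by
    rw [← Finset.prod_univ_sum]
    exact Finset.prod_eq_one fun a _ => hu1 a
  simp only [tensorFam_mixture]
  rw [avgError_sum_smul D _ hw fun p j => tensorFam fun a => R j a (p a)]
  calc _ ≤ ∑ p ∈ Fintype.piFinset fun a => (u a).support, (∏ a, u a (p a)) * C :=
        Finset.sum_le_sum fun p _ =>
          mul_le_mul_of_nonneg_left (hC p) (Finset.prod_nonneg fun a _ => hu0 a _)
    _ = C := by rw [← Finset.sum_mul, hw, one_mul]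

end AvgError

section Symmetrization

variable {J : Type*} [Fintype J]

lemma card_mul_card_sub_one_mul_le_two_mul_sum {g : J → J → ℝ} {c : ℝ} (hdiag : ∀ j, 0 ≤ g j j)
    (hpair : ∀ i j, i ≠ j → c ≤ g i j + g j i) :
    Fintype.card J * (Fintype.card J - 1) * c ≤ 2 * ∑ i, ∑ j, g i j := by
  classical
  calc Fintype.card J * (Fintype.card J - 1) * c
      = ∑ i : J, ∑ j : J, (c - if i = j then c else 0) := by
        simp only [Finset.sum_sub_distrib, Finset.sum_ite_eq, Finset.mem_univ, if_true,
          Finset.sum_const, Finset.card_univ, nsmul_eq_mul]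
        ring
    _ ≤ ∑ i, ∑ j, (g i j + g j i) := by
        refine Finset.sum_le_sum fun i _ => Finset.sum_le_sum fun j _ => ?_
        split_ifs with hij
        · subst hij
          linarith [hdiag i]
        · linarith [hpair i j hij]
    _ = 2 * ∑ i, ∑ j, g i j := by
        simp only [Finset.sum_add_distrib]
        rw [Finset.sum_comm (f := fun i j => g j i), two_mul]

lemma card_sub_one_mul_le_sum_avgError [Nonempty J] {m : Type*} [Fintype m] [DecidableEq m]
    {D : J → Matrix m m ℂ} (hD : IsPOVM D) {σ : J → J → Matrix m m ℂ}
    (hσ : ∀ j i, IsDensity (σ j i)) {ε : ℝ}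
    (hsym : ∀ i j, (D j * σ j i).trace.re ≤ (D j * σ i j).trace.re + ε) :
    (Fintype.card J - 1) * ((1 - ε) / 2) ≤ ∑ i, avgError D fun j => σ j i := by
  have hcard : (0 : ℝ) < Fintype.card J := by exact_mod_cast Fintype.card_pos
  have hpair : ∀ i j, i ≠ j →
      1 - ε ≤ (1 - (D j * σ j i).trace.re) + (1 - (D i * σ i j).trace.re) := fun i j hij => by
    linarith [hsym i j, hD.re_trace_mul_add_re_trace_mul_le_one (hσ i j) hij]
  have hsum := card_mul_card_sub_one_mul_le_two_mul_sum
    (g := fun i j => 1 - (D j * σ j i).trace.re)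
    (fun j => sub_nonneg.mpr (hD.re_trace_mul_le_one (hσ j j) j)) hpair
  simp only [← card_mul_avgError, ← Finset.mul_sum] at hsum
  refine le_of_mul_le_mul_left ?_ hcard
  linarith

end Symmetrization

section Channel

variable {Z S J k d : Type*} [Fintype J] [Fintype k] [DecidableEq k] [Fintype d] [DecidableEq d]
  {ρ : Z → S → Matrix d d ℂ} {U : Z → S →₀ ℝ} {θ : ℝ} {D : J → Matrix (k → d) (k → d) ℂ}

lemma bddAbove_range_avgError (hρ : ∀ z s, IsDensity (ρ z s)) (hD : IsPOVM D) (f : J → k → Z) :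
    BddAbove (Set.range fun s : k → S => avgError D fun j => tensorFam fun a =>
      ρ (f j a) (s a)) :=
  ⟨1, Set.forall_mem_range.mpr fun _ =>
    avgError_le_one hD.nonneg fun _ => tensorFam_nonneg fun _ => (hρ _ _).1.nonneg⟩

theorem card_sub_one_div_card_mul_le_iSup_avgError [Nonempty J]
    (hρ : ∀ z s, IsDensity (ρ z s)) (hU0 : ∀ z s, 0 ≤ U z s)
    (hU1 : ∀ z, ((U z).sum fun _ w => w) = 1)
    (hsym : ∀ z z', traceNorm (mixture (U z') (ρ z) - mixture (U z) (ρ z')) ≤ θ)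
    (hD : IsPOVM D) (f : J → k → Z) :
    ((Fintype.card J - 1) / Fintype.card J : ℝ) * ((1 - Fintype.card k * θ) / 2) ≤
      ⨆ s : k → S, avgError D fun j => tensorFam fun a => ρ (f j a) (s a) := by
  set C := ⨆ s : k → S, avgError D fun j => tensorFam fun a => ρ (f j a) (s a)
  let τ : J → J → k → Matrix d d ℂ := fun j i a => mixture (U (f i a)) (ρ (f j a))
  have hτ : ∀ j i a, IsDensity (τ j i a) := fun j i a =>
    isDensity_mixture (hU0 _) (hU1 _) (hρ _)
  have hswap : ∀ i j, (D j * tensorFam (τ j i)).trace.re ≤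
      (D j * tensorFam (τ i j)).trace.re + Fintype.card k * θ := fun i j => by
    have hsum : ∑ a, traceNorm (τ j i a - τ i j a) ≤ Fintype.card k * θ := by
      simpa using Finset.sum_le_card_nsmul Finset.univ _ θ fun a _ => hsym (f j a) (f i a)
    linarith [re_trace_mul_tensorFam_le_add_sum_traceNorm (hD.nonneg j) (hD.le_one j)
      (hτ j i) (hτ i j)]
  have hjam : ∀ i, avgError D (fun j => tensorFam (τ j i)) ≤ C := fun i =>
    avgError_tensorFam_mixture_le D (fun j a => ρ (f j a)) (fun a => hU0 (f i a))
      (fun a => hU1 (f i a)) (le_ciSup (bddAbove_range_avgError hρ hD f))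
  have hcard : (0 : ℝ) < Fintype.card J := by exact_mod_cast Fintype.card_pos
  rw [div_mul_eq_mul_div, div_le_iff₀' hcard]
  calc (Fintype.card J - 1) * ((1 - Fintype.card k * θ) / 2)
      ≤ ∑ i, avgError D fun j => tensorFam (τ j i) :=
        card_sub_one_mul_le_sum_avgError hD (fun j i => isDensity_tensorFam (hτ j i)) hswap
    _ ≤ Fintype.card J * C := by
        simpa using Finset.sum_le_card_nsmul Finset.univ _ C fun i _ => hjam i

theorem statement11_general (hρ : ∀ z s, IsDensity (ρ z s)) (hU0 : ∀ z s, 0 ≤ U z s)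
    (hU1 : ∀ z, ((U z).sum fun _ w => w) = 1)
    (hsym : ∀ z z', traceNorm (mixture (U z') (ρ z) - mixture (U z) (ρ z')) ≤ θ)
    (hJ : 2 ≤ Fintype.card J) (f : J → k → Z) (hD : IsPOVM D) :
    (1 - Fintype.card k * θ) / 4 ≤
      ⨆ s : k → S, avgError D fun j => tensorFam fun a => ρ (f j a) (s a) := by
  have hnonneg : 0 ≤ ⨆ s : k → S, avgError D fun j => tensorFam fun a => ρ (f j a) (s a) :=
    Real.iSup_nonneg fun _ => avgError_nonneg hD fun _ => isDensity_tensorFam fun _ => hρ _ _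
  obtain hneg | hpos := le_total (1 - Fintype.card k * θ) 0
  · linarith
  have hJ' : (2 : ℝ) ≤ Fintype.card J := by exact_mod_cast hJ
  have : Nonempty J := Fintype.card_pos_iff.mp (by lia)
  have hhalf : (1 / 2 : ℝ) ≤ (Fintype.card J - 1) / Fintype.card J := by
    rw [div_le_div_iff₀ two_pos (by linarith)]
    linarith
  calc (1 - Fintype.card k * θ) / 4 = 1 / 2 * ((1 - Fintype.card k * θ) / 2) := by ring
    _ ≤ (Fintype.card J - 1) / Fintype.card J * ((1 - Fintype.card k * θ) / 2) :=
        mul_le_mul_of_nonneg_right hhalf (by linarith)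
    _ ≤ _ := card_sub_one_div_card_mul_le_iSup_avgError hρ hU0 hU1 hsym hD f

end Channel

/-- If the family is approximately `𝒳𝒴`-symmetrizable within `θ` in trace
norm, then every deterministic code with at least two messages has worst-case average error
at least `(1 − nθ)/4`. -/
theorem statement11 {𝒳 𝒴 𝒮 : Type*} [Fintype 𝒳] [DecidableEq 𝒳] [Fintype 𝒴] [DecidableEq 𝒴]
    [Nonempty 𝒮] {d : ℕ}
    (ρ : 𝒳 → 𝒴 → 𝒮 → Matrix (Fin d) (Fin d) ℂ)
    (hρ : ∀ x y s, IsDensity (ρ x y s))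
    (U : 𝒳 → 𝒴 → 𝒮 →₀ ℝ)
    (hU0 : ∀ x y s, 0 ≤ U x y s)
    (hU1 : ∀ x y, (U x y).sum (fun _ a => a) = 1)
    (θ : ℝ) (hθ : 0 ≤ θ)
    (hsym : ∀ x x' y y',
      traceNorm ((U x' y').sum (fun s w => w • ρ x y s) -
        (U x y).sum (fun s w => w • ρ x' y' s)) ≤ θ)
    (n M₁ M₂ : ℕ) (hn : 1 ≤ n) (hM : 2 ≤ M₁ * M₂)
    (f₁ : Fin M₁ → (Fin n → 𝒳)) (f₂ : Fin M₂ → (Fin n → 𝒴))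
    (D : Fin M₁ → Fin M₂ → Matrix (Fin n → Fin d) (Fin n → Fin d) ℂ)
    (hD : ∀ m₁ m₂, (D m₁ m₂).PosSemidef)
    (hDsum : ∑ m₁, ∑ m₂, D m₁ m₂ = 1) :
    (1 - (n : ℝ) * θ) / 4 ≤
      ⨆ sv : Fin n → 𝒮,
        1 - (1 / ((M₁ : ℝ) * (M₂ : ℝ))) * ∑ m₁, ∑ m₂,
          (Matrix.trace (D m₁ m₂ *
            tensorFam fun k => ρ (f₁ m₁ k) (f₂ m₂ k) (sv k))).re := by
  have hPOVM : IsPOVM fun j : Fin M₁ × Fin M₂ => D j.1 j.2 :=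
    ⟨fun j => hD j.1 j.2, by rw [Fintype.sum_prod_type, hDsum]⟩
  simpa [avgError, Fintype.sum_prod_type] using
    statement11_general (fun z : 𝒳 × 𝒴 => hρ z.1 z.2) (fun z => hU0 z.1 z.2)
      (fun z => hU1 z.1 z.2) (fun z z' => hsym z.1 z'.1 z.2 z'.2) (by simpa using hM)
      (fun j k => (f₁ j.1 k, f₂ j.2 k)) hPOVM
end
end
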